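/- arXiv:1406.0551 — 2 statements merged into one kernel-verified Lean document; each statement's English description precedes it below -/
import Mathlib

section
/- Suppose 𝔓 = Ω and the traded options are the call options X_c with linear pricing functional 𝒫. Then parts (i), (ii) and (iv) of Condition C are necessary and sufficient for the absence of a robust uniformly strong arbitrage. In consequence, when (i), (ii) and (iv) hold but part (iii) of Condition C fails, there is no robust uniformly strong arbitrage but no market calibrated model exists. -/
open MeasureTheory Set Filter Topology
open scoped ENNReal NNReal Classical

noncomputable section

namespace RobustFin

/-- Canonical path space: the values `S₀, S₁, …, S_n` of the asset. -/
abbrev Path (n : ℕ) := Fin (n + 1) → ℝ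

/-- Paths starting at `s₀` with nonnegative coordinates: the canonical space `Ω`. -/
def Omega (n : ℕ) (s₀ : ℝ) : Set (Path n) := {ω | ω 0 = s₀ ∧ ∀ i, 0 ≤ ω i}

/-- The first `j` coordinates `S₁, …, S_j` of a path. -/
def restr {n : ℕ} (j : Fin n) (ω : Path n) : Fin j → ℝ :=
  fun i => ω ⟨(i : ℕ) + 1, by have h1 := i.isLt; have h2 := j.isLt; omega⟩

/-- The coordinates `S₁, …, S_n` of a path. -/
def tailCoords {n : ℕ} (ω : Path n) : Fin n → ℝ := fun i => ω i.succ

/-- A dynamic trading strategy: bounded measurable positions `Δ_j(S₁,…,S_j)`. -/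
structure Dyn (n : ℕ) where
  pos : (j : Fin n) → (Fin j → ℝ) → ℝ
  meas : ∀ j, Measurable (pos j)
  bdd : ∀ j, ∃ C, ∀ x, |pos j x| ≤ C

/-- No short selling: all dynamic positions are nonnegative. -/
def Dyn.Nonneg {n : ℕ} (D : Dyn n) : Prop := ∀ j x, 0 ≤ D.pos j x

/-- Gains from dynamic trading: `Σ_j Δ_j(S₁,…,S_j)(S_{j+1} − S_j)`. -/
def Dyn.gains {n : ℕ} (D : Dyn n) (ω : Path n) : ℝ :=
  ∑ j : Fin n, D.pos j (restr j ω) * (ω j.succ - ω j.castSucc)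

/-- A static option portfolio: a constant (cash) position plus a finite linear
combination of options with maturity indices `idx` and nonnegative strikes. -/
structure Static (n : ℕ) where
  const : ℝ
  m : ℕ
  coeff : Fin m → ℝ
  idx : Fin m → Fin n
  strike : Fin m → ℝ
  strike_nonneg : ∀ k, 0 ≤ strike k

/-- Payoff of the portfolio when the options are call options. -/
def Static.callPayoff {n : ℕ} (X : Static n) (ω : Path n) : ℝ :=
  X.const + ∑ k, X.coeff k * max (ω (X.idx k).succ - X.strike k) 0

/-- Payoff of the portfolio when the options are put options. -/
def Static.putPayoff {n : ℕ} (X : Static n) (ω : Path n) : ℝ :=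
  X.const + ∑ k, X.coeff k * max (X.strike k - ω (X.idx k).succ) 0

/-- Price of a static portfolio, given the unit option prices `c i K`;
this is the (unique) linear pricing functional determined by the prices. -/
def Static.price {n : ℕ} (X : Static n) (c : Fin n → ℝ → ℝ) : ℝ :=
  X.const + ∑ k, X.coeff k * c (X.idx k) (X.strike k)

/-- Expectation of a real payoff, valued in `EReal`, with the convention
`∞ − ∞ = −∞` (in `EReal`, `⊤ - ⊤ = ⊥`). -/
def eexp {n : ℕ} (P : Measure (Path n)) (f : Path n → ℝ) : EReal :=
  ((∫⁻ ω, ENNReal.ofReal (f ω) ∂P : ℝ≥0∞) : EReal) -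
    ((∫⁻ ω, ENNReal.ofReal (-(f ω)) ∂P : ℝ≥0∞) : EReal)

/-- The positive part of an extended real number, in `ℝ≥0∞`. -/
def posE (x : EReal) : ℝ≥0∞ := if x = ⊤ then ⊤ else ENNReal.ofReal x.toReal

/-- Expectation of an `EReal`-valued payoff, with the convention `∞ − ∞ = −∞`. -/
def eexpE {n : ℕ} (P : Measure (Path n)) (f : Path n → EReal) : EReal :=
  ((∫⁻ ω, posE (f ω) ∂P : ℝ≥0∞) : EReal) - ((∫⁻ ω, posE (-(f ω)) ∂P : ℝ≥0∞) : EReal)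

/-- A market calibrated model for the market with static payoffs `pay` (calls or puts),
prices `c` and prediction set `P`. -/
def Calibrated {n : ℕ} (pay : Static n → Path n → ℝ) (c : Fin n → ℝ → ℝ)
    (P : Set (Path n)) (Q : Measure (Path n)) : Prop :=
  IsProbabilityMeasure Q ∧ Q P = 1 ∧
    ∀ (X : Static n) (D : Dyn n), D.Nonneg →
      eexp Q (fun ω => pay X ω + D.gains ω) ≤ (X.price c : EReal)

/-- A weak free lunch with vanishing risk. -/
def WFLVR {n : ℕ} (pay : Static n → Path n → ℝ) (c : Fin n → ℝ → ℝ)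
    (P : Set (Path n)) : Prop :=
  ∃ (Xs : ℕ → Static n) (Ds : ℕ → Dyn n) (X : Static n) (D : Dyn n) (L : ℝ),
    (∀ k, (Ds k).Nonneg) ∧ D.Nonneg ∧
    (∀ ω ∈ P, Tendsto (fun k => pay (Xs k) ω + (Ds k).gains ω) atTop (nhds 0)) ∧
    (∀ k, ∀ ω ∈ P, pay X ω + D.gains ω ≤ pay (Xs k) ω + (Ds k).gains ω) ∧
    Tendsto (fun k => (Xs k).price c) atTop (nhds L) ∧ L < 0

/-- A robust uniformly strong arbitrage. -/
def RobustArbitrage {n : ℕ} (pay : Static n → Path n → ℝ) (c : Fin n → ℝ → ℝ)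
    (P : Set (Path n)) : Prop :=
  ∃ (X : Static n) (D : Dyn n), D.Nonneg ∧ X.price c < 0 ∧
    ∀ ω ∈ P, 0 ≤ pay X ω + D.gains ω

/-- The superhedging price of `G` over semi-static strategies (no short selling). -/
def V {n : ℕ} (pay : Static n → Path n → ℝ) (c : Fin n → ℝ → ℝ)
    (P : Set (Path n)) (G : Path n → EReal) : EReal :=
  sInf {q : EReal | ∃ (X : Static n) (D : Dyn n), D.Nonneg ∧ q = (X.price c : EReal) ∧
    ∀ ω ∈ P, G ω ≤ ((pay X ω + D.gains ω : ℝ) : EReal)}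

/-- The superhedging price of `G` when the dynamic positions may take both signs. -/
def Vsigned {n : ℕ} (pay : Static n → Path n → ℝ) (c : Fin n → ℝ → ℝ)
    (P : Set (Path n)) (G : Path n → EReal) : EReal :=
  sInf {q : EReal | ∃ (X : Static n) (D : Dyn n), q = (X.price c : EReal) ∧
    ∀ ω ∈ P, G ω ≤ ((pay X ω + D.gains ω : ℝ) : EReal)}

/-- `Π_μ`: probability measures on the path space with marginals `δ_{s₀}, μ₁, …, μ_n`. -/
def PiMu {n : ℕ} (s₀ : ℝ) (μ : Fin n → Measure ℝ) : Set (Measure (Path n)) :=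
  {π | IsProbabilityMeasure π ∧ π (Omega n s₀) = 1 ∧
       ∀ i : Fin n, π.map (fun ω => ω i.succ) = μ i}

/-- The coordinate process is a supermartingale in its natural filtration:
for every Borel `A ⊆ ℝ₊^j`, `∫ 1_A(S₁,…,S_j)(S_{j+1} − S_j) dπ ≤ 0`. -/
def IsSupermartingaleLaw {n : ℕ} (π : Measure (Path n)) : Prop :=
  ∀ (j : Fin n) (A : Set (Fin j → ℝ)), MeasurableSet A →
    ∫ ω, Set.indicator A (fun _ => (1 : ℝ)) (restr j ω) * (ω j.succ - ω j.castSucc) ∂π ≤ 0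

/-- `M⁻_μ`: calibrated supermartingale measures. -/
def MSet {n : ℕ} (s₀ : ℝ) (μ : Fin n → Measure ℝ) : Set (Measure (Path n)) :=
  {π ∈ PiMu s₀ μ | IsSupermartingaleLaw π}

/-- `M⁻_{μ,𝔓}`: calibrated supermartingale measures giving full mass to `P`. -/
def MSetP {n : ℕ} (s₀ : ℝ) (μ : Fin n → Measure ℝ) (P : Set (Path n)) :
    Set (Measure (Path n)) :=
  {π ∈ MSet s₀ μ | π P = 1}

/-- Assumption A on the marginals. -/
def AssumptionA {n : ℕ} (s₀ : ℝ) (μ : Fin n → Measure ℝ) : Prop :=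
  (∀ i, ∫ x, x ∂(μ i) ≤ s₀) ∧
  (∀ i j : Fin n, i ≤ j → ∫ x, x ∂(μ j) ≤ ∫ x, x ∂(μ i)) ∧
  (∀ φ : ℝ → ℝ, ConcaveOn ℝ Set.univ φ → Monotone φ → (∀ x, 0 ≤ φ x) →
    ∀ i j : Fin n, i ≤ j → ∫ x, φ x ∂(μ j) ≤ ∫ x, φ x ∂(μ i))

/-- Condition C (i): each `c_i` is nonnegative, convex and nonincreasing on `ℝ₊`. -/
def CondC1 {n : ℕ} (c : Fin n → ℝ → ℝ) : Prop :=
  ∀ i, (∀ x, 0 ≤ x → 0 ≤ c i x) ∧ ConvexOn ℝ (Set.Ici 0) (c i) ∧ AntitoneOn (c i) (Set.Ici 0)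

/-- Condition C (ii): `s₀ ≥ c₁(0) ≥ … ≥ c_n(0) ≥ 0` and `c_i'(0+) ≥ −1`
(the latter expressed, for convex `c_i`, through the slopes at `0`). -/
def CondC2 {n : ℕ} (s₀ : ℝ) (c : Fin n → ℝ → ℝ) : Prop :=
  (∀ i, c i 0 ≤ s₀) ∧ (∀ i j : Fin n, i ≤ j → c j 0 ≤ c i 0) ∧ (∀ i, 0 ≤ c i 0) ∧
    (∀ i, ∀ K : ℝ, 0 < K → c i 0 - K ≤ c i K)

/-- Condition C (iii): `c_i(K) → 0` as `K → ∞`. -/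
def CondC3 {n : ℕ} (c : Fin n → ℝ → ℝ) : Prop :=
  ∀ i, Tendsto (c i) atTop (nhds 0)

/-- Condition C (iv): for every `x ≥ 0`, `c_i(0) − c_i(x)` is nonincreasing in `i`. -/
def CondC4 {n : ℕ} (c : Fin n → ℝ → ℝ) : Prop :=
  ∀ x : ℝ, 0 ≤ x → ∀ i j : Fin n, i ≤ j → c j 0 - c j x ≤ c i 0 - c i x

/-- Condition C. -/
def CondC {n : ℕ} (s₀ : ℝ) (c : Fin n → ℝ → ℝ) : Prop :=
  CondC1 c ∧ CondC2 s₀ c ∧ CondC3 c ∧ CondC4 c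

/-- Condition P (i). -/
def CondP1 {n : ℕ} (p : Fin n → ℝ → ℝ) : Prop :=
  ∀ i, (∀ x, 0 ≤ x → 0 ≤ p i x) ∧ ConvexOn ℝ (Set.Ici 0) (p i) ∧ MonotoneOn (p i) (Set.Ici 0)

/-- Condition P (ii): `s₀ ≥ lim (x − p₁(x)) ≥ … ≥ 0` and `0 ≤ p_i'(0+) ≤ 1`. -/
def CondP2 {n : ℕ} (s₀ : ℝ) (p : Fin n → ℝ → ℝ) : Prop :=
  (∃ L : Fin n → ℝ,
    (∀ i, Tendsto (fun x => x - p i x) atTop (nhds (L i))) ∧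
    (∀ i, L i ≤ s₀) ∧ (∀ i j : Fin n, i ≤ j → L j ≤ L i) ∧ (∀ i, 0 ≤ L i)) ∧
  (∃ d : Fin n → ℝ,
    (∀ i, Tendsto (fun K => (p i K - p i 0) / K) (nhdsWithin 0 (Set.Ioi 0)) (nhds (d i))) ∧
    (∀ i, 0 ≤ d i ∧ d i ≤ 1))

/-- Condition P (iii): `p_i(K) → 0` as `K → 0` (within `ℝ₊`). -/
def CondP3 {n : ℕ} (p : Fin n → ℝ → ℝ) : Prop :=
  ∀ i, Tendsto (p i) (nhdsWithin 0 (Set.Ici 0)) (nhds 0)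

/-- Condition P (iv): `p_i(x)` is nondecreasing in `i`. -/
def CondP4 {n : ℕ} (p : Fin n → ℝ → ℝ) : Prop :=
  ∀ x : ℝ, 0 ≤ x → ∀ i j : Fin n, i ≤ j → p i x ≤ p j x

/-- Condition P. -/
def CondP {n : ℕ} (s₀ : ℝ) (p : Fin n → ℝ → ℝ) : Prop :=
  CondP1 p ∧ CondP2 s₀ p ∧ CondP3 p ∧ CondP4 p

/-- The measures `μ_i` defined from the put prices by `μ_i([0,K]) = p_i'(K)`;
equivalently, `p_i(K) = ∫ (K − x)⁺ μ_i(dx)`. -/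
def PutPricesFrom {n : ℕ} (p : Fin n → ℝ → ℝ) (μ : Fin n → Measure ℝ) : Prop :=
  (∀ i, IsProbabilityMeasure (μ i)) ∧ (∀ i, μ i (Set.Iio 0) = 0) ∧
  (∀ i, Integrable (fun x => x) (μ i)) ∧
  (∀ i, ∀ K : ℝ, 0 ≤ K → p i K = ∫ x, max (K - x) 0 ∂(μ i))

/-- The path `(s₀, s₁, …, s_i, x, s_{i+2}, …, s_n)`. -/
def mkPath {n : ℕ} (s₀ : ℝ) (i : Fin n) (s : Fin i → ℝ) (x : ℝ)
    (t : Fin (n - ((i : ℕ) + 1)) → ℝ) : Path n := fun j =>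
  if h0 : (j : ℕ) = 0 then s₀
  else if h1 : (j : ℕ) ≤ (i : ℕ) then
    s ⟨(j : ℕ) - 1, by have := j.isLt; have := i.isLt; omega⟩
  else if h2 : (j : ℕ) = (i : ℕ) + 1 then x
  else t ⟨(j : ℕ) - (i : ℕ) - 2, by have := j.isLt; have := i.isLt; omega⟩

/-- The family `β_i : ℝ₊^i → ℝ` defined recursively by `β_n = 0` and
`β_i(s₁,…,s_i) = (sup_{s_{i+2},…,s_n} limsup_{x→∞} ((β_{i+1}(s₁,…,s_i,x)
 + G(s₁,…,s_i,x,s_{i+2},…,s_n)/x)·1_𝔓)) ∨ 0`. -/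
def IsBetaFamily {n : ℕ} (s₀ : ℝ) (P : Set (Path n)) (G : (Fin n → ℝ) → EReal)
    (β : (i : Fin (n + 1)) → (Fin i → ℝ) → ℝ) : Prop :=
  (∀ s, β (Fin.last n) s = 0) ∧
  ∀ (i : Fin n) (s : Fin i → ℝ), (∀ k, 0 ≤ s k) →
    (β ⟨(i : ℕ), by have := i.isLt; omega⟩ s : EReal) =
      max 0 (⨆ (t : Fin (n - ((i : ℕ) + 1)) → ℝ) (_ : ∀ k, 0 ≤ t k),
        Filter.limsup (fun x : ℝ =>
          if mkPath s₀ i s x t ∈ P then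
            ((β ⟨(i : ℕ) + 1, by have := i.isLt; omega⟩ (Fin.snoc s x) : ℝ) : EReal)
              + G (tailCoords (mkPath s₀ i s x t)) * ((x⁻¹ : ℝ) : EReal)
          else 0) Filter.atTop)

/-- Gains of the dynamic strategy `(β_i)`: `β₀(S₁ − s₀) + Σ_i β_i(S₁,…,S_i)(S_{i+1} − S_i)`. -/
def gainsOf {n : ℕ} (β : (i : Fin (n + 1)) → (Fin i → ℝ) → ℝ) (ω : Path n) : ℝ :=
  ∑ j : Fin n, β ⟨(j : ℕ), by have := j.isLt; omega⟩ (restr j ω) * (ω j.succ - ω j.castSucc)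

/-- The penalty function `λ_𝔓(s₁,…,s_n) = (1 + s₁ + … + s_n)·1{(s₁,…,s_n) ∉ 𝔓}`. -/
def lambdaP {n : ℕ} (P : Set (Path n)) (ω : Path n) : ℝ :=
  if ω ∈ P then 0 else 1 + ∑ i : Fin n, ω i.succ

/-- `min(s₀, s₁, …, s_m)`. -/
def pmin {m : ℕ} (s₀ : ℝ) (s : Fin m → ℝ) : ℝ :=
  Finset.univ.inf' Finset.univ_nonempty
    (fun j : Fin (m + 1) =>
      if h : (j : ℕ) = 0 then s₀ else s ⟨(j : ℕ) - 1, by have := j.isLt; omega⟩)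

/-- `max(s₀, s₁, …, s_m)`. -/
def pmax {m : ℕ} (s₀ : ℝ) (s : Fin m → ℝ) : ℝ :=
  Finset.univ.sup' Finset.univ_nonempty
    (fun j : Fin (m + 1) =>
      if h : (j : ℕ) = 0 then s₀ else s ⟨(j : ℕ) - 1, by have := j.isLt; omega⟩)

/-! ### Elementary convexity lemmas -/

/-- Discrete representation of a convex nonincreasing function on a finite grid. -/
lemma grid_rep (c : ℝ → ℝ) (hconv : ConvexOn ℝ (Set.Ici 0) c) (hanti : AntitoneOn c (Set.Ici 0))
    (T : Finset ℝ) : (∀ x ∈ T, 0 ≤ x) → T.Nonempty →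
    ∃ (m : ℝ) (t : ℝ) (w : ℝ → ℝ), m ∈ T ∧ (∀ x ∈ T, m ≤ x) ∧ t ∈ T ∧ (∀ x ∈ T, 0 ≤ w x) ∧
      (∀ k ∈ T, c k = c t + ∑ x ∈ T, w x * max (x - k) 0) ∧
      (∀ y, 0 ≤ y → y ≤ m → c t + ∑ x ∈ T, w x * (x - y) ≤ c y) ∧
      ((∑ x ∈ T, w x = 0) ∨ ∃ u ∈ T, m < u ∧ (∑ x ∈ T, w x) * (u - m) = c m - c u) := by
  induction T using Finset.induction_on_min with
  | empty => intro _ h; exact absurd h (by simp)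
  | insert a s hlt ih =>
    intro hpos _
    have ha : 0 ≤ a := hpos a (by simp)
    have has : a ∉ s := fun h => lt_irrefl _ (hlt a h)
    rcases s.eq_empty_or_nonempty with rfl | hne
    · refine ⟨a, a, fun _ => 0, by simp, by simp, by simp, by simp, by simp, ?_, by simp⟩
      intro y hy hya
      simpa using hanti hy ha hya
    · obtain ⟨m, t, w, hm, hmin, ht, hw, hrep, hlow, -⟩ :=
        ih (fun x hx => hpos x (by simp [hx])) hne
      have ham : a < m := hlt m hm
      have hm0 : 0 ≤ m := by linarith
      set W := ∑ x ∈ s, w x with hW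
      have hE : ∀ y, ∑ x ∈ s, w x * (x - y) = ∑ x ∈ s, w x * (x - m) + W * (m - y) := by
        intro y
        rw [hW, Finset.sum_mul, ← Finset.sum_add_distrib]
        exact Finset.sum_congr rfl (fun x _ => by ring)
      have hEm : c m = c t + ∑ x ∈ s, w x * (x - m) := by
        rw [hrep m hm]
        congr 1
        exact Finset.sum_congr rfl (fun x hx => by
          rw [max_eq_left (by linarith [hmin x hx])])
      set e := (c a - c m) / (m - a) - W with he
      have hma : 0 < m - a := by linarith
      have hemul : (e + W) * (m - a) = c a - c m := by
        rw [he]; field_simp; ring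
      have he0 : 0 ≤ e := by
        have := hlow a ha ham.le
        rw [hE a] at this
        have h2 : 0 ≤ e * (m - a) := by nlinarith
        exact nonneg_of_mul_nonneg_left h2 hma
      set w' : ℝ → ℝ := fun x => if x = a then 0 else if x = m then w x + e else w x with hw'
      have hsum : ∀ φ : ℝ → ℝ, ∑ x ∈ insert a s, w' x * φ x
          = ∑ x ∈ s, w x * φ x + e * φ m := by
        intro φ
        rw [Finset.sum_insert has]
        have h1 : ∀ x ∈ s, w' x * φ x = w x * φ x + (if x = m then e * φ m else 0) := by
          intro x hx
          have hxa : x ≠ a := fun h => has (h ▸ hx)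
          by_cases hxm : x = m
          · subst hxm; simp [hw', hxa]; ring
          · simp [hw', hxa, hxm]
        rw [Finset.sum_congr rfl h1, Finset.sum_add_distrib, Finset.sum_ite_eq' s m, if_pos hm]
        simp [hw']
      have hWs : ∑ x ∈ insert a s, w' x = W + e := by
        have := hsum (fun _ => 1)
        simpa using this
      refine ⟨a, t, w', by simp, ?_, by simp [ht], ?_, ?_, ?_, Or.inr ⟨m, by simp [hm], ham, ?_⟩⟩
      · intro x hx
        rcases Finset.mem_insert.1 hx with rfl | hx
        · exact le_rfl
        · exact (hlt x hx).le
      · intro x hx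
        rcases Finset.mem_insert.1 hx with rfl | hx
        · simp [hw']
        · have := hw x hx
          simp only [hw']
          split_ifs <;> linarith
      · intro k hk
        rw [hsum (fun x => max (x - k) 0)]
        rcases Finset.mem_insert.1 hk with rfl | hk
        · rw [max_eq_left hma.le]
          have : ∑ x ∈ s, w x * max (x - k) 0 = ∑ x ∈ s, w x * (x - k) :=
            Finset.sum_congr rfl (fun x hx => by
              rw [max_eq_left (by linarith [hlt x hx])])
          rw [this, hE k]
          linarith
        · rw [max_eq_right (by linarith [hmin k hk]), hrep k hk]
          simp
      · intro y hy hya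
        rw [hsum (fun x => x - y), hE y]
        have h1 : (e + W) * (m - y) ≤ c y - c m := by
          rcases hya.eq_or_lt with rfl | hlt'
          · exact hemul.le
          · have h3 := hconv.2 (show y ∈ Set.Ici (0 : ℝ) from hy)
              (show m ∈ Set.Ici (0 : ℝ) from hm0)
              (show 0 ≤ (m - a) / (m - y) from div_nonneg hma.le (by linarith))
              (show 0 ≤ (a - y) / (m - y) from div_nonneg (by linarith) (by linarith))
              (by rw [← add_div]; rw [div_eq_one_iff_eq] <;> linarith)
            have hmy : 0 < m - y := by linarith
            have h4 : ((m - a) / (m - y)) • y + ((a - y) / (m - y)) • m = a := by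
              simp only [smul_eq_mul]; field_simp; ring
            rw [h4] at h3
            simp only [smul_eq_mul] at h3
            have h5 : (m - y) * c a ≤ (m - a) * c y + (a - y) * c m := by
              have := mul_le_mul_of_nonneg_left h3 hmy.le
              have h6 : (m - y) * ((m - a) / (m - y) * c y + (a - y) / (m - y) * c m)
                = (m - a) * c y + (a - y) * c m := by field_simp
              linarith
            have h7 : (m - a) * ((e + W) * (m - y)) ≤ (m - a) * (c y - c m) := by
              have : (m - a) * ((e + W) * (m - y)) = (c a - c m) * (m - y) := by
                rw [← hemul]; ring
              rw [this]; nlinarith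
            exact le_of_mul_le_mul_left h7 hma
        nlinarith
      · rw [hWs]; linarith

/-- A call price function without static arbitrage. -/
def GoodC (c : ℝ → ℝ) : Prop :=
  (∀ x, 0 ≤ x → 0 ≤ c x) ∧ ConvexOn ℝ (Set.Ici 0) c ∧ AntitoneOn c (Set.Ici 0) ∧
    ∀ K : ℝ, 0 < K → c 0 - K ≤ c K

lemma goodC_call (s : ℝ) : GoodC (fun K => max (s - K) 0) := by
  refine ⟨fun x _ => le_max_right _ _, ?_, ?_, ?_⟩
  · have h1 : ConvexOn ℝ (Set.Ici (0 : ℝ)) (fun K : ℝ => s - K) := by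
      refine ⟨convex_Ici 0, fun x _ y _ a b _ _ hab => ?_⟩
      simp only [smul_eq_mul]
      have : s = (a + b) * s := by rw [hab]; ring
      nlinarith
    exact h1.sup (convexOn_const 0 (convex_Ici 0))
  · intro x _ y _ hxy
    exact max_le_max (by linarith) le_rfl
  · intro K hK
    rcases le_total s 0 with h | h
    · simp only [sub_zero]; rw [max_eq_right h]
      exact le_trans (by linarith) (le_max_right _ _)
    · simp only [sub_zero]; rw [max_eq_left h]; exact le_max_left _ _

/-- Positivity of the pricing functional on a fixed grid. -/
lemma price_nonneg (c : ℝ → ℝ) (hc : GoodC c) (T : Finset ℝ) (hT : ∀ x ∈ T, 0 ≤ x)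
    (h0 : (0 : ℝ) ∈ T) (a : ℝ) (b : ℝ → ℝ) (hb : 0 ≤ ∑ k ∈ T, b k)
    (hnn : ∀ x ∈ T, 0 ≤ a + ∑ k ∈ T, b k * max (x - k) 0) :
    0 ≤ a + ∑ k ∈ T, b k * c k := by
  obtain ⟨hc0, hconv, hanti, hsl⟩ := hc
  obtain ⟨m, t, w, hm, hmin, ht, hw, hrep, -, hW⟩ := grid_rep c hconv hanti T hT ⟨0, h0⟩
  have hm0 : m = 0 := le_antisymm (hmin 0 h0) (hT m hm)
  subst hm0
  have hW1 : ∑ x ∈ T, w x ≤ 1 := by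
    rcases hW with h | ⟨u, hu, hu0, h⟩
    · rw [h]; norm_num
    · have := hsl u hu0
      rw [sub_zero] at h
      by_contra hcon
      push Not at hcon
      nlinarith
  have ha : 0 ≤ a := by
    have := hnn 0 h0
    have h2 : ∑ k ∈ T, b k * max (0 - k) 0 = 0 :=
      Finset.sum_eq_zero (fun k hk => by rw [max_eq_right (by linarith [hT k hk])]; ring)
    linarith
  have key : a + ∑ k ∈ T, b k * c k = (1 - ∑ x ∈ T, w x) * a
      + ∑ x ∈ T, w x * (a + ∑ k ∈ T, b k * max (x - k) 0) + c t * ∑ k ∈ T, b k := by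
    have h1 : ∑ k ∈ T, b k * c k
        = c t * ∑ k ∈ T, b k + ∑ x ∈ T, w x * ∑ k ∈ T, b k * max (x - k) 0 := by
      have : ∀ k ∈ T, b k * c k = c t * b k + ∑ x ∈ T, w x * (b k * max (x - k) 0) := by
        intro k hk
        rw [hrep k hk, mul_add, Finset.mul_sum]
        congr 1
        · ring
        · exact Finset.sum_congr rfl (fun x _ => by ring)
      rw [Finset.sum_congr rfl this, Finset.sum_add_distrib, Finset.sum_comm, ← Finset.mul_sum]
      congr 1
      exact Finset.sum_congr rfl (fun x _ => by rw [Finset.mul_sum])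
    have h2 : ∑ x ∈ T, w x * (a + ∑ k ∈ T, b k * max (x - k) 0)
        = (∑ x ∈ T, w x) * a + ∑ x ∈ T, w x * ∑ k ∈ T, b k * max (x - k) 0 := by
      rw [Finset.sum_mul, ← Finset.sum_add_distrib]
      exact Finset.sum_congr rfl (fun x _ => by ring)
    rw [h1, h2]; ring
  rw [key]
  have h1 : 0 ≤ (1 - ∑ x ∈ T, w x) * a := mul_nonneg (by linarith) ha
  have h2 : 0 ≤ ∑ x ∈ T, w x * (a + ∑ k ∈ T, b k * max (x - k) 0) :=
    Finset.sum_nonneg (fun x hx => mul_nonneg (hw x hx) (hnn x hx))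
  have h3 : 0 ≤ c t * ∑ k ∈ T, b k := mul_nonneg (hc0 t (hT t ht)) hb
  linarith

/-- The nonincreasing convex envelope of a piecewise linear function. -/
lemma envelope (T : Finset ℝ) (hT : ∀ x ∈ T, 0 ≤ x) (h0 : (0 : ℝ) ∈ T) (b : ℝ → ℝ)
    (hex : ∃ α δ : ℝ, 0 ≤ δ ∧ ∀ y, 0 ≤ y → α - δ * y ≤ ∑ k ∈ T, b k * max (y - k) 0) :
    ∃ (C : ℝ) (β : ℝ → ℝ),
      (∀ c, GoodC c → C + ∑ k ∈ T, β k * c k ≤ ∑ k ∈ T, b k * c k) ∧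
      (∀ α δ : ℝ, 0 ≤ δ → (∀ y, 0 ≤ y → α - δ * y ≤ ∑ k ∈ T, b k * max (y - k) 0) →
        ∀ x, 0 ≤ x → α - δ * x ≤ C + ∑ k ∈ T, β k * max (x - k) 0) ∧
      (∀ c c' : ℝ → ℝ, c' 0 ≤ c 0 → (∀ x, 0 ≤ x → c' 0 - c' x ≤ c 0 - c x) →
        ∑ k ∈ T, β k * c k ≤ ∑ k ∈ T, β k * c' k) := by
  set B := ∑ k ∈ T, b k with hB
  set σ := min 0 B with hσ
  set f : ℝ → ℝ := fun y => ∑ k ∈ T, b k * max (y - k) 0 with hf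
  have hslope : ∀ α δ : ℝ, 0 ≤ δ → (∀ y, 0 ≤ y → α - δ * y ≤ f y) → -δ ≤ σ := by
    intro α δ hδ h
    refine le_min (by linarith) ?_
    by_contra hcon
    push Not at hcon
    set M := ∑ k ∈ T, k with hM
    have hkM : ∀ k ∈ T, k ≤ M := fun k hk =>
      Finset.single_le_sum (f := fun k : ℝ => k) (fun x hx => hT x hx) hk
    have hM0 : 0 ≤ M := hkM 0 h0
    set D := ∑ k ∈ T, b k * k with hD
    have hfl : ∀ y, M ≤ y → f y = B * y - D := by
      intro y hy
      rw [hB, hD, Finset.sum_mul, ← Finset.sum_sub_distrib]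
      exact Finset.sum_congr rfl (fun k hk => by
        rw [max_eq_left (by linarith [hkM k hk])]; ring)
    set y := max M ((-D - α + 1) / (-δ - B)) with hy
    have h1 := h y (le_trans hM0 (le_max_left _ _))
    rw [hfl y (le_max_left _ _)] at h1
    have h2 : (-D - α + 1) / (-δ - B) ≤ y := le_max_right _ _
    rw [div_le_iff₀ (by linarith)] at h2
    nlinarith
  set L : Set (ℝ × ℝ) := {p | 0 ≤ p.2 ∧ ∀ y, 0 ≤ y → p.1 - p.2 * y ≤ f y} with hL
  obtain ⟨α₀, δ₀, hδ₀, hαδ₀⟩ := hex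
  have hLne : L.Nonempty := ⟨(α₀, δ₀), hδ₀, hαδ₀⟩
  set G : ℝ → ℝ := fun x => sSup ((fun p : ℝ × ℝ => p.1 - p.2 * x - σ * x) '' L) with hG
  have hbdd : ∀ x, 0 ≤ x → BddAbove ((fun p : ℝ × ℝ => p.1 - p.2 * x - σ * x) '' L) := by
    intro x hx
    refine ⟨f x - σ * x, ?_⟩
    rintro _ ⟨p, hp, rfl⟩
    have := hp.2 x hx
    simp only
    linarith
  have hGf : ∀ x, 0 ≤ x → G x ≤ f x - σ * x := by
    intro x hx
    refine csSup_le (hLne.image _) ?_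
    rintro _ ⟨p, hp, rfl⟩
    have := hp.2 x hx
    simp only
    linarith
  have hleG : ∀ p ∈ L, ∀ x, 0 ≤ x → p.1 - p.2 * x - σ * x ≤ G x := fun p hp x hx =>
    le_csSup (hbdd x hx) ⟨p, hp, rfl⟩
  have hconv : ConvexOn ℝ (Set.Ici 0) G := by
    refine ⟨convex_Ici 0, fun x hx y hy a b' ha hb' hab => ?_⟩
    refine csSup_le (hLne.image _) ?_
    rintro _ ⟨p, hp, rfl⟩
    have h1 := mul_le_mul_of_nonneg_left (hleG p hp x hx) ha
    have h2 := mul_le_mul_of_nonneg_left (hleG p hp y hy) hb'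
    simp only [smul_eq_mul]
    have h3 : p.1 = (a + b') * p.1 := by rw [hab]; ring
    nlinarith
  have hanti : AntitoneOn G (Set.Ici 0) := by
    intro x hx y hy hxy
    refine csSup_le (hLne.image _) ?_
    rintro _ ⟨p, hp, rfl⟩
    have h1 := hleG p hp x hx
    have h2 := hslope p.1 p.2 hp.1 hp.2
    simp only
    nlinarith
  obtain ⟨m, t, w, -, -, -, hw, hrep, -, -⟩ := grid_rep G hconv hanti T hT ⟨0, h0⟩
  set W := ∑ k ∈ T, w k with hW
  set β : ℝ → ℝ := fun k => w k + (if k = 0 then σ - W else 0) with hβ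
  set C := G t + ∑ k ∈ T, w k * k with hC
  have hsum : ∀ (v : ℝ → ℝ) (r : ℝ) (φ : ℝ → ℝ),
      ∑ k ∈ T, (v k + (if k = 0 then r else 0)) * φ k = ∑ k ∈ T, v k * φ k + r * φ 0 := by
    intro v r φ
    have : ∀ k ∈ T, (v k + (if k = 0 then r else 0)) * φ k
        = v k * φ k + (if k = 0 then r * φ 0 else 0) := by
      intro k _
      by_cases hk : k = 0
      · subst hk; simp; ring
      · simp [hk]
    rw [Finset.sum_congr rfl this, Finset.sum_add_distrib, Finset.sum_ite_eq' T, if_pos h0]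
  have hsumβ : ∑ k ∈ T, β k = σ := by
    have := hsum w (σ - W) (fun _ => 1)
    simp only [mul_one] at this
    rw [this]; ring
  have hgT : ∀ x ∈ T, C + ∑ k ∈ T, β k * max (x - k) 0 = G x + σ * x := by
    intro x hx
    rw [hsum w (σ - W) (fun k => max (x - k) 0), hrep x hx, sub_zero, max_eq_left (hT x hx)]
    have : ∑ k ∈ T, w k * max (k - x) 0
        = ∑ k ∈ T, w k * max (x - k) 0 + ∑ k ∈ T, w k * k - W * x := by
      rw [hW, Finset.sum_mul, ← Finset.sum_add_distrib, ← Finset.sum_sub_distrib]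
      refine Finset.sum_congr rfl (fun k _ => ?_)
      rcases le_total k x with h | h
      · rw [max_eq_right (by linarith), max_eq_left (by linarith)]; ring
      · rw [max_eq_left (by linarith), max_eq_right (by linarith)]; ring
    rw [this]; ring
  refine ⟨C, β, ?_, ?_, ?_⟩
  · intro c hc
    have := price_nonneg c hc T hT h0 (-C) (fun k => b k - β k) ?_ ?_
    · simp only [sub_mul, Finset.sum_sub_distrib] at this
      linarith
    · rw [Finset.sum_sub_distrib, hsumβ]
      have : σ ≤ B := min_le_right _ _
      linarith
    · intro x hx
      simp only [sub_mul, Finset.sum_sub_distrib]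
      have h1 := hgT x hx
      have h2 := hGf x (hT x hx)
      simp only [hf] at h2
      linarith
  · intro α δ hδ h x hx
    have hp : (α, δ) ∈ L := ⟨hδ, h⟩
    have := price_nonneg _ (goodC_call x) T hT h0 (C - α)
      (fun k => β k + (if k = 0 then δ else 0)) ?_ ?_
    · rw [hsum β δ (fun k => max (x - k) 0), sub_zero, max_eq_left hx] at this
      linarith
    · have h1 := hsum β δ (fun _ => 1)
      simp only [mul_one] at h1
      rw [h1, hsumβ]
      linarith [hslope α δ hδ h]
    · intro y hy
      rw [hsum β δ (fun k => max (y - k) 0), sub_zero, max_eq_left (hT y hy)]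
      have h1 := hgT y hy
      have h2 := hleG _ hp y (hT y hy)
      simp only at h2
      linarith
  · intro c c' hcc hx
    rw [hsum w _ c, hsum w _ c']
    have h1 : ∑ k ∈ T, w k * (c k - c 0) ≤ ∑ k ∈ T, w k * (c' k - c' 0) :=
      Finset.sum_le_sum (fun k hk =>
        mul_le_mul_of_nonneg_left (by linarith [hx k (hT k hk)]) (hw k hk))
    simp only [mul_sub, Finset.sum_sub_distrib, ← Finset.sum_mul] at h1
    have h2 : σ ≤ 0 := min_le_left _ _
    nlinarith

/-- Backward induction: a superhedged static payoff has nonnegative price. -/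
lemma backward (T : Finset ℝ) (hT : ∀ x ∈ T, 0 ≤ x) (h0 : (0 : ℝ) ∈ T) (s₀ : ℝ) (hs₀ : 0 ≤ s₀)
    (c : ℕ → ℝ → ℝ) (hc0 : ∀ K, c 0 K = max (s₀ - K) 0)
    (Δ : ℕ → (ℕ → ℝ) → ℝ) (hΔ : ∀ i ω, 0 ≤ Δ i ω)
    (had : ∀ i ω ω', (∀ j ≤ i, ω j = ω' j) → Δ i ω = Δ i ω') (n : ℕ) :
    (∀ i ≤ n, GoodC (c i)) → (∀ i < n, c (i + 1) 0 ≤ c i 0) →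
    (∀ i < n, ∀ x, 0 ≤ x → c (i + 1) 0 - c (i + 1) x ≤ c i 0 - c i x) →
    ∀ (a : ℝ) (b : ℕ → ℝ → ℝ),
    (∀ ω : ℕ → ℝ, ω 0 = s₀ → (∀ i, 0 ≤ ω i) →
      0 ≤ a + ∑ i ∈ Finset.range (n + 1), ∑ k ∈ T, b i k * max (ω i - k) 0
        + ∑ i ∈ Finset.range n, Δ i ω * (ω (i + 1) - ω i)) →
    0 ≤ a + ∑ i ∈ Finset.range (n + 1), ∑ k ∈ T, b i k * c i k := by
  induction n with
  | zero =>
    intro _ _ _ a b h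
    have := h (fun _ => s₀) rfl (fun _ => hs₀)
    simpa [hc0] using this
  | succ n ih =>
    intro hg hz hiv a b h
    have hstep : ∀ ω : ℕ → ℝ, ω 0 = s₀ → (∀ i, 0 ≤ ω i) → ∀ y, 0 ≤ y →
        0 ≤ a + ∑ i ∈ Finset.range (n + 1), ∑ k ∈ T, b i k * max (ω i - k) 0
          + ∑ i ∈ Finset.range n, Δ i ω * (ω (i + 1) - ω i)
          + ∑ k ∈ T, b (n + 1) k * max (y - k) 0 + Δ n ω * (y - ω n) := by
      intro ω h1 h2 y hy
      have h3 := h (fun j => if j = n + 1 then y else ω j) (by simp [h1])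
        (fun i => by split_ifs <;> simp [hy, h2])
      rw [Finset.sum_range_succ _ (n + 1)] at h3
      have e1 : ∑ i ∈ Finset.range (n + 1), ∑ k ∈ T,
          b i k * max ((if i = n + 1 then y else ω i) - k) 0
          = ∑ i ∈ Finset.range (n + 1), ∑ k ∈ T, b i k * max (ω i - k) 0 :=
        Finset.sum_congr rfl (fun i hi => by
          rw [if_neg (by have := Finset.mem_range.1 hi; omega)])
      have e2 : ∀ i ≤ n, Δ i (fun j => if j = n + 1 then y else ω j) = Δ i ω := fun i hi =>
        had i _ _ (fun j hj => by rw [if_neg (by omega)])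
      have e3 : ∑ i ∈ Finset.range (n + 1), Δ i (fun j => if j = n + 1 then y else ω j) *
            ((if i + 1 = n + 1 then y else ω (i + 1)) - (if i = n + 1 then y else ω i))
          = ∑ i ∈ Finset.range n, Δ i ω * (ω (i + 1) - ω i) + Δ n ω * (y - ω n) := by
        rw [Finset.sum_range_succ, e2 n le_rfl, if_pos rfl, if_neg (by omega)]
        congr 1
        exact Finset.sum_congr rfl (fun i hi => by
          have := Finset.mem_range.1 hi
          rw [e2 i (by omega), if_neg (by omega), if_neg (by omega)])
      simp only [if_true] at h3
      rw [e1, e3] at h3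
      linarith
    set A : (ℕ → ℝ) → ℝ := fun ω =>
      a + ∑ i ∈ Finset.range (n + 1), ∑ k ∈ T, b i k * max (ω i - k) 0
          + ∑ i ∈ Finset.range n, Δ i ω * (ω (i + 1) - ω i) with hA
    have hmin : ∀ ω : ℕ → ℝ, ω 0 = s₀ → (∀ i, 0 ≤ ω i) → ∀ y, 0 ≤ y →
        (-A ω + Δ n ω * ω n) - Δ n ω * y ≤ ∑ k ∈ T, b (n + 1) k * max (y - k) 0 := by
      intro ω h1 h2 y hy
      have := hstep ω h1 h2 y hy
      simp only [hA]
      linarith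
    obtain ⟨C, β, p1, p2, p3⟩ := envelope T hT h0 (b (n + 1))
      ⟨_, _, hΔ n _, hmin (fun _ => s₀) rfl (fun _ => hs₀)⟩
    have hb' : ∀ (φ : ℕ → ℝ → ℝ), ∑ i ∈ Finset.range (n + 1), ∑ k ∈ T,
        (b i k + if i = n then β k else 0) * φ i k
        = ∑ i ∈ Finset.range (n + 1), ∑ k ∈ T, b i k * φ i k + ∑ k ∈ T, β k * φ n k := by
      intro φ
      simp only [add_mul, Finset.sum_add_distrib]
      congr 1
      rw [Finset.sum_eq_single n]
      · simp
      · intro i _ hi; simp [hi]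
      · simp
    have hfin := ih (fun i hi => hg i (by omega)) (fun i hi => hz i (by omega))
      (fun i hi => hiv i (by omega)) (a + C) (fun i k => b i k + if i = n then β k else 0) (by
        intro ω h1 h2
        rw [hb' (fun i k => max (ω i - k) 0)]
        have := p2 _ _ (hΔ n ω) (hmin ω h1 h2) (ω n) (h2 n)
        simp only [hA] at this
        linarith)
    rw [hb' c] at hfin
    rw [Finset.sum_range_succ _ (n + 1)]
    have q1 := p1 (c (n + 1)) (hg (n + 1) le_rfl)
    have q3 := p3 (c n) (c (n + 1)) (hz n (by omega)) (hiv n (by omega))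
    linarith

/-! ### Conditions imply absence of arbitrage -/

lemma regroup {n m : ℕ} (coeff : Fin m → ℝ) (idx : Fin m → Fin n) (strike : Fin m → ℝ)
    (T : Finset ℝ) (hT : ∀ l, strike l ∈ T) (φ : ℕ → ℝ → ℝ) :
    ∑ l, coeff l * φ ((idx l : ℕ) + 1) (strike l)
      = ∑ i ∈ Finset.range (n + 1), ∑ k ∈ T,
        (∑ l, if (idx l : ℕ) + 1 = i ∧ strike l = k then coeff l else 0) * φ i k := by
  simp only [Finset.sum_mul]
  simp_rw [Finset.sum_comm (s := T)]
  rw [Finset.sum_comm]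
  refine Finset.sum_congr rfl (fun l _ => ?_)
  rw [Finset.sum_eq_single ((idx l : ℕ) + 1), Finset.sum_eq_single (strike l)]
  · simp
  · intro k _ hk
    rw [if_neg (fun h => hk h.2.symm)]; simp
  · intro h; exact absurd (hT l) h
  · intro i _ hi
    refine Finset.sum_eq_zero (fun k _ => ?_)
    rw [if_neg (fun h => hi h.1.symm)]; simp
  · intro h
    exact absurd (Finset.mem_range.2 (by have := (idx l).isLt; omega)) h

lemma no_arb {n : ℕ} {s₀ : ℝ} (hs₀ : 0 < s₀) (c : Fin n → ℝ → ℝ)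
    (h1 : CondC1 c) (h2 : CondC2 s₀ c) (h4 : CondC4 c) :
    ¬ RobustArbitrage Static.callPayoff c (Omega n s₀) := by
  rintro ⟨X, D, hD, hprice, hpay⟩
  set T : Finset ℝ := insert 0 (Finset.univ.image X.strike) with hT
  have hTn : ∀ x ∈ T, 0 ≤ x := by
    intro x hx
    rcases Finset.mem_insert.1 hx with rfl | hx
    · exact le_rfl
    · obtain ⟨k, _, rfl⟩ := Finset.mem_image.1 hx
      exact X.strike_nonneg k
  have hTs : ∀ l, X.strike l ∈ T := fun l =>
    Finset.mem_insert_of_mem (Finset.mem_image_of_mem _ (Finset.mem_univ l))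
  let c' : ℕ → ℝ → ℝ := fun i K => match i with
    | 0 => max (s₀ - K) 0
    | j + 1 => if h : j < n then c ⟨j, h⟩ K else 0
  have hc's : ∀ (j : ℕ) (h : j < n), c' (j + 1) = c ⟨j, h⟩ := by
    intro j h; funext K; simp [c', h]
  let Δ : ℕ → (ℕ → ℝ) → ℝ := fun j ω =>
    if h : j < n then D.pos ⟨j, h⟩ (restr ⟨j, h⟩ (fun i : Fin (n + 1) => ω i)) else 0
  have hgood : ∀ i : Fin n, GoodC (c i) := fun i =>
    ⟨(h1 i).1, (h1 i).2.1, (h1 i).2.2, h2.2.2.2 i⟩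
  have hres := backward T hTn (by simp [hT]) s₀ hs₀.le c' (fun K => rfl) Δ
    (by
      intro i ω
      simp only [Δ]
      split_ifs with h
      · exact hD _ _
      · exact le_rfl)
    (by
      intro i ω ω' h
      simp only [Δ]
      split_ifs with hi
      · congr 1
        funext k
        simp only [restr]
        exact h _ (by have := k.isLt; simp only at this; omega)
      · rfl)
    n
    (by
      intro i hi
      rcases i with _ | j
      · exact goodC_call s₀
      · rw [hc's j (by omega)]; exact hgood _)
    (by
      intro i hi
      rw [hc's i hi]
      rcases i with _ | j
      · simp only [c', sub_zero]
        exact le_trans (h2.1 _) (le_max_left _ _)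
      · rw [hc's j (by omega)]
        exact h2.2.1 _ _ (by simp [Fin.le_def]))
    (by
      intro i hi x hx
      rw [hc's i hi]
      rcases i with _ | j
      · simp only [c', sub_zero]
        rw [max_eq_left hs₀.le]
        have a1 := h2.1 ⟨0, hi⟩
        have a2 := (h1 ⟨0, hi⟩).1 x hx
        have a3 : c ⟨0, hi⟩ 0 - x ≤ c ⟨0, hi⟩ x := by
          rcases hx.eq_or_lt with rfl | hx
          · simp
          · exact h2.2.2.2 _ x hx
        rcases max_cases (s₀ - x) 0 with ⟨h, _⟩ | ⟨h, _⟩ <;> rw [h] <;> linarith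
      · rw [hc's j (by omega)]
        exact h4 x hx _ _ (by simp [Fin.le_def]))
    X.const
    (fun i k => ∑ l, if (X.idx l : ℕ) + 1 = i ∧ X.strike l = k then X.coeff l else 0)
    (by
      intro ω hω0 hω
      rw [← regroup X.coeff X.idx X.strike T hTs (fun i k => max (ω i - k) 0)]
      have := hpay (fun i : Fin (n + 1) => ω i) ⟨by simpa using hω0, fun i => hω i⟩
      have e : D.gains (fun i : Fin (n + 1) => ω i)
          = ∑ i ∈ Finset.range n, Δ i ω * (ω (i + 1) - ω i) := by
        rw [Finset.sum_range]
        unfold Dyn.gains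
        refine Finset.sum_congr rfl (fun j _ => ?_)
        simp [Δ, j.isLt]
      rw [e] at this
      simpa [Static.callPayoff] using this)
  rw [← regroup X.coeff X.idx X.strike T hTs c'] at hres
  have e : ∑ l, X.coeff l * c' ((X.idx l : ℕ) + 1) (X.strike l)
      = ∑ l, X.coeff l * c (X.idx l) (X.strike l) :=
    Finset.sum_congr rfl (fun l _ => by rw [hc's _ (X.idx l).isLt])
  rw [e] at hres
  unfold Static.price at hprice
  linarith

/-! ### Absence of arbitrage implies the conditions -/

/-- The zero strategy. -/
def dynZero (n : ℕ) : Dyn n where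
  pos := fun _ _ => 0
  meas := fun _ => measurable_const
  bdd := fun _ => ⟨0, fun _ => by simp⟩

lemma dynZero_gains {n : ℕ} (ω : Path n) : (dynZero n).gains ω = 0 := by
  simp [dynZero, Dyn.gains]

/-- Hold one unit of the asset from time `p` to time `q`. -/
def dynHold (n p q : ℕ) : Dyn n where
  pos := fun j _ => if p ≤ (j : ℕ) ∧ (j : ℕ) < q then 1 else 0
  meas := fun _ => measurable_const
  bdd := fun _ => ⟨1, fun _ => by split_ifs <;> simp⟩

/-- Hold one unit from time `i + 1` to time `q`, provided `S_{i+1} ≤ K`. -/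
def dynInd (n i q : ℕ) (K : ℝ) : Dyn n where
  pos := fun j x => if h : i + 1 ≤ (j : ℕ) ∧ (j : ℕ) < q then
    (if x ⟨i, by omega⟩ ≤ K then 1 else 0) else 0
  meas := fun j => by
    by_cases h : i + 1 ≤ (j : ℕ) ∧ (j : ℕ) < q
    · simp only [h, and_self, dif_pos]
      exact Measurable.ite (measurableSet_le (measurable_pi_apply _) measurable_const)
        measurable_const measurable_const
    · simp only [h, dif_neg, not_false_eq_true]
      exact measurable_const
  bdd := fun _ => ⟨1, fun _ => by split_ifs <;> simp⟩

lemma telescope {n : ℕ} (ω : Path n) (p q : ℕ) (hpq : p ≤ q) (hq : q < n + 1) :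
    ∑ j : Fin n, (if p ≤ (j : ℕ) ∧ (j : ℕ) < q then (1 : ℝ) else 0) * (ω j.succ - ω j.castSucc)
      = ω ⟨q, hq⟩ - ω ⟨p, by omega⟩ := by
  induction q, hpq using Nat.le_induction with
  | base =>
    rw [sub_self]
    refine Finset.sum_eq_zero (fun j _ => ?_)
    rw [if_neg (by omega)]; simp
  | succ q hpq ih =>
    have h := ih (by omega)
    have hs : ∀ j : Fin n, (if p ≤ (j : ℕ) ∧ (j : ℕ) < q + 1 then (1 : ℝ) else 0)
          * (ω j.succ - ω j.castSucc)
        = (if p ≤ (j : ℕ) ∧ (j : ℕ) < q then (1 : ℝ) else 0) * (ω j.succ - ω j.castSucc)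
          + if j = ⟨q, by omega⟩ then (ω j.succ - ω j.castSucc) else 0 := by
      intro j
      by_cases hj : (j : ℕ) = q
      · have : j = ⟨q, by omega⟩ := Fin.ext hj
        rw [if_pos (by omega), if_neg (by omega), if_pos this]; ring
      · have : j ≠ ⟨q, by omega⟩ := fun e => hj (by rw [e])
        rw [if_neg this, add_zero]
        congr 1
        by_cases hh : p ≤ (j : ℕ) ∧ (j : ℕ) < q
        · rw [if_pos hh, if_pos (by omega)]
        · rw [if_neg hh, if_neg (by omega)]
    rw [Finset.sum_congr rfl (fun j _ => hs j), Finset.sum_add_distrib, h]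
    simp

lemma dynHold_gains {n : ℕ} (ω : Path n) (p q : ℕ) (hpq : p ≤ q) (hq : q < n + 1) :
    (dynHold n p q).gains ω = ω ⟨q, hq⟩ - ω ⟨p, by omega⟩ :=
  telescope ω p q hpq hq

lemma dynInd_gains {n : ℕ} (ω : Path n) (i q : ℕ) (K : ℝ) (hpq : i + 1 ≤ q) (hq : q < n + 1) :
    (dynInd n i q K).gains ω
      = (if ω ⟨i + 1, by omega⟩ ≤ K then 1 else 0) * (ω ⟨q, hq⟩ - ω ⟨i + 1, by omega⟩) := by
  rw [← telescope ω (i + 1) q hpq hq, Finset.mul_sum]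
  unfold Dyn.gains
  refine Finset.sum_congr rfl (fun j _ => ?_)
  by_cases h : i + 1 ≤ (j : ℕ) ∧ (j : ℕ) < q
  · simp only [dynInd]
    rw [dif_pos h, if_pos h, one_mul]
    rfl
  · simp only [dynInd]
    rw [dif_neg h, if_neg h]
    ring

/-- One option. -/
def st1 {n : ℕ} (a : ℝ) (b : ℝ) (i : Fin n) (K : ℝ) (hK : 0 ≤ K) : Static n where
  const := a
  m := 1
  coeff := fun _ => b
  idx := fun _ => i
  strike := fun _ => K
  strike_nonneg := fun _ => hK

/-- Concatenation of portfolios. -/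
def stAdd {n : ℕ} (X Y : Static n) : Static n where
  const := X.const + Y.const
  m := X.m + Y.m
  coeff := Fin.append X.coeff Y.coeff
  idx := Fin.append X.idx Y.idx
  strike := Fin.append X.strike Y.strike
  strike_nonneg := fun k => by
    refine Fin.addCases (fun i => ?_) (fun i => ?_) k
    · rw [Fin.append_left]; exact X.strike_nonneg i
    · rw [Fin.append_right]; exact Y.strike_nonneg i

lemma st1_pay {n : ℕ} (a b : ℝ) (i : Fin n) (K : ℝ) (hK : 0 ≤ K) (ω : Path n) :
    (st1 a b i K hK).callPayoff ω = a + b * max (ω i.succ - K) 0 := by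
  exact congrArg (a + ·) (Fin.sum_univ_one (fun _ : Fin 1 => b * max (ω i.succ - K) 0))

lemma st1_price {n : ℕ} (a b : ℝ) (i : Fin n) (K : ℝ) (hK : 0 ≤ K) (c : Fin n → ℝ → ℝ) :
    (st1 a b i K hK).price c = a + b * c i K := by
  exact congrArg (a + ·) (Fin.sum_univ_one (fun _ : Fin 1 => b * c i K))

lemma stAdd_pay {n : ℕ} (X Y : Static n) (ω : Path n) :
    (stAdd X Y).callPayoff ω = X.callPayoff ω + Y.callPayoff ω := by
  have := Fin.sum_univ_add (fun k : Fin (X.m + Y.m) => Fin.append X.coeff Y.coeff k *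
    max (ω (Fin.append X.idx Y.idx k).succ - Fin.append X.strike Y.strike k) 0)
  simp only [Fin.append_left, Fin.append_right] at this
  unfold Static.callPayoff
  refine (congrArg (X.const + Y.const + ·) this).trans ?_
  ring

lemma stAdd_price {n : ℕ} (X Y : Static n) (c : Fin n → ℝ → ℝ) :
    (stAdd X Y).price c = X.price c + Y.price c := by
  have := Fin.sum_univ_add (fun k : Fin (X.m + Y.m) => Fin.append X.coeff Y.coeff k *
    c (Fin.append X.idx Y.idx k) (Fin.append X.strike Y.strike k))
  simp only [Fin.append_left, Fin.append_right] at this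
  unfold Static.price
  refine (congrArg (X.const + Y.const + ·) this).trans ?_
  ring

lemma cond_of_no_arb {n : ℕ} {s₀ : ℝ} (c : Fin n → ℝ → ℝ)
    (h : ¬ RobustArbitrage Static.callPayoff c (Omega n s₀)) :
    CondC1 c ∧ CondC2 s₀ c ∧ CondC4 c := by
  have key : ∀ (X : Static n) (D : Dyn n), D.Nonneg →
      (∀ ω ∈ Omega n s₀, 0 ≤ X.callPayoff ω + D.gains ω) → 0 ≤ X.price c := by
    intro X D hD hp
    by_contra hcon
    exact h ⟨X, D, hD, not_le.1 hcon, hp⟩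
  have z0 : (dynZero n).Nonneg := fun _ _ => le_rfl
  have hold0 : ∀ p q, (dynHold n p q).Nonneg := fun p q j x => by
    simp only [dynHold]; split_ifs <;> simp
  have ind0 : ∀ p q K, (dynInd n p q K).Nonneg := fun p q K j x => by
    simp only [dynInd]; split_ifs <;> simp
  have hnn : ∀ i x, 0 ≤ x → 0 ≤ c i x := by
    intro i x hx
    have := key (st1 0 1 i x hx) (dynZero n) z0 (fun ω _ => by
      rw [st1_pay, dynZero_gains]; simp)
    rw [st1_price] at this
    linarith
  have hzero : ∀ i j : Fin n, i ≤ j → c j 0 ≤ c i 0 := by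
    intro i j hij
    have := key (stAdd (st1 0 1 i 0 le_rfl) (st1 0 (-1) j 0 le_rfl))
      (dynHold n (i + 1) (j + 1)) (hold0 _ _) (fun ω hω => by
        rw [stAdd_pay, st1_pay, st1_pay,
          dynHold_gains ω _ _ (by simpa using hij) (by have := j.isLt; omega), sub_zero, sub_zero,
          max_eq_left (hω.2 _), max_eq_left (hω.2 _)]
        have e1 : (⟨(j : ℕ) + 1, by omega⟩ : Fin (n + 1)) = j.succ := rfl
        have e2 : (⟨(i : ℕ) + 1, by omega⟩ : Fin (n + 1)) = i.succ := rfl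
        rw [e1, e2]; linarith)
    rw [stAdd_price, st1_price, st1_price] at this
    linarith
  refine ⟨fun i => ⟨hnn i, ⟨convex_Ici 0, ?_⟩, ?_⟩, ⟨?_, hzero, fun i => hnn i 0 le_rfl, ?_⟩, ?_⟩
  · intro x hx' y hy' a b ha hb hab
    have hx : 0 ≤ x := hx'
    have hy : 0 ≤ y := hy'
    have hz : 0 ≤ a * x + b * y := add_nonneg (mul_nonneg ha hx) (mul_nonneg hb hy)
    have := key (stAdd (stAdd (st1 0 a i x hx) (st1 0 b i y hy)) (st1 0 (-1) i _ hz))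
      (dynZero n) z0 (fun ω _ => by
        rw [stAdd_pay, stAdd_pay, st1_pay, st1_pay, st1_pay, dynZero_gains]
        set s := ω i.succ
        have m1 := mul_le_mul_of_nonneg_left (le_max_left (s - x) 0) ha
        have m2 := mul_le_mul_of_nonneg_left (le_max_left (s - y) 0) hb
        have m3 := mul_nonneg ha (le_max_right (s - x) 0)
        have m4 := mul_nonneg hb (le_max_right (s - y) 0)
        have m5 : s = (a + b) * s := by rw [hab]; ring
        have : max (s - (a * x + b * y)) 0 ≤ a * max (s - x) 0 + b * max (s - y) 0 :=
          max_le (by linarith) (by linarith)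
        linarith)
    rw [stAdd_price, stAdd_price, st1_price, st1_price, st1_price] at this
    simp only [smul_eq_mul]
    linarith
  · intro x hx' y hy' hxy
    have hx : 0 ≤ x := hx'
    have hy : 0 ≤ y := hy'
    have := key (stAdd (st1 0 1 i x hx) (st1 0 (-1) i y hy)) (dynZero n) z0 (fun ω _ => by
        rw [stAdd_pay, st1_pay, st1_pay, dynZero_gains]
        have : max (ω i.succ - y) 0 ≤ max (ω i.succ - x) 0 := max_le_max (by linarith) le_rfl
        linarith)
    rw [stAdd_price, st1_price, st1_price] at this
    linarith
  · intro i
    have := key (st1 s₀ (-1) i 0 le_rfl) (dynHold n 0 (i + 1)) (hold0 _ _) (fun ω hω => by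
        rw [st1_pay, dynHold_gains ω _ _ (by omega) (by have := i.isLt; omega), sub_zero,
          max_eq_left (hω.2 _)]
        have e1 : (⟨0, by omega⟩ : Fin (n + 1)) = 0 := rfl
        have e2 : (⟨(i : ℕ) + 1, by omega⟩ : Fin (n + 1)) = i.succ := rfl
        rw [e1, e2, hω.1]; linarith)
    rw [st1_price] at this
    linarith
  · intro i K hK
    have := key (stAdd (st1 K 1 i K hK.le) (st1 0 (-1) i 0 le_rfl)) (dynZero n) z0 (fun ω hω => by
        rw [stAdd_pay, st1_pay, st1_pay, dynZero_gains, sub_zero, max_eq_left (hω.2 i.succ)]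
        linarith [le_max_left (ω i.succ - K) 0])
    rw [stAdd_price, st1_price, st1_price] at this
    linarith
  · intro x hx i j hij
    have := key (stAdd (stAdd (st1 0 1 i 0 le_rfl) (st1 0 (-1) i x hx))
        (stAdd (st1 0 (-1) j 0 le_rfl) (st1 0 1 j x hx)))
      (dynInd n i (j + 1) x) (ind0 _ _ _) (fun ω hω => by
        rw [stAdd_pay, stAdd_pay, stAdd_pay, st1_pay, st1_pay, st1_pay, st1_pay,
          dynInd_gains ω _ _ _ (by simpa using hij) (by have := j.isLt; omega), sub_zero, sub_zero,
          max_eq_left (hω.2 _), max_eq_left (hω.2 _)]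
        have e1 : (⟨(j : ℕ) + 1, by omega⟩ : Fin (n + 1)) = j.succ := rfl
        have e2 : (⟨(i : ℕ) + 1, by omega⟩ : Fin (n + 1)) = i.succ := rfl
        rw [e1, e2]
        have m1 := le_max_left (ω j.succ - x) 0
        have m2 := le_max_right (ω j.succ - x) 0
        split_ifs with hh
        · rw [max_eq_right (a := ω i.succ - x) (by linarith)]; linarith
        · rw [max_eq_left (a := ω i.succ - x) (by linarith)]; linarith)
    rw [stAdd_price, stAdd_price, stAdd_price, st1_price, st1_price, st1_price, st1_price] at this
    linarith

/-! ### Calibrated models force (iii) -/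

lemma cond3_of_calibrated {n : ℕ} {s₀ : ℝ} (c : Fin n → ℝ → ℝ) (h1 : CondC1 c)
    (Q : Measure (Path n)) (hQ : Calibrated Static.callPayoff c (Omega n s₀) Q) : CondC3 c := by
  obtain ⟨-, -, hcal⟩ := hQ
  have z0 : (dynZero n).Nonneg := fun _ _ => le_rfl
  intro i
  set I : ℝ → ℝ≥0∞ := fun K => ∫⁻ ω, ENNReal.ofReal (max (ω i.succ - K) 0) ∂Q with hI
  have hup : ∀ K, 0 ≤ K → I K ≠ ⊤ := by
    intro K hK htop
    have := hcal (st1 0 1 i K hK) (dynZero n) z0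
    have e : (fun ω : Path n => (st1 0 1 i K hK).callPayoff ω + (dynZero n).gains ω)
        = fun ω => max (ω i.succ - K) 0 := by
      funext ω; rw [st1_pay, dynZero_gains]; ring
    rw [e] at this
    unfold eexp at this
    have e2 : ∫⁻ ω : Path n, ENNReal.ofReal (-(max (ω i.succ - K) 0)) ∂Q = 0 := by
      simp [ENNReal.ofReal_eq_zero.2]
    have e3 : ∫⁻ ω : Path n, ENNReal.ofReal (max (ω i.succ - K) 0) ∂Q = ⊤ := htop
    rw [e2, e3] at this
    simp at this
  have hlow : ∀ K, 0 ≤ K → c i K ≤ (I K).toReal := by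
    intro K hK
    have := hcal (st1 0 (-1) i K hK) (dynZero n) z0
    have e : (fun ω : Path n => (st1 0 (-1) i K hK).callPayoff ω + (dynZero n).gains ω)
        = fun ω => -(max (ω i.succ - K) 0) := by
      funext ω; rw [st1_pay, dynZero_gains]; ring
    rw [e, st1_price] at this
    unfold eexp at this
    have e2 : ∫⁻ ω : Path n, ENNReal.ofReal (-(max (ω i.succ - K) 0)) ∂Q = 0 := by
      simp [ENNReal.ofReal_eq_zero.2]
    simp only [neg_neg] at this
    have e3 : ∫⁻ ω : Path n, ENNReal.ofReal (max (ω i.succ - K) 0) ∂Q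
      = ENNReal.ofReal (I K).toReal := (ENNReal.ofReal_toReal (hup K hK)).symm
    rw [e2, e3] at this
    rw [EReal.coe_ennreal_ofReal, max_eq_left ENNReal.toReal_nonneg] at this
    rw [EReal.coe_ennreal_zero, zero_sub, ← EReal.coe_neg, EReal.coe_le_coe_iff] at this
    linarith
  have hlim : Tendsto I atTop (𝓝 0) := by
    have := tendsto_lintegral_filter_of_dominated_convergence (μ := Q) (l := (atTop : Filter ℝ))
      (F := fun K (ω : Path n) => ENNReal.ofReal (max (ω i.succ - K) 0)) (f := fun _ => 0)
      (fun ω => ENNReal.ofReal (max (ω i.succ - 0) 0))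
      (Eventually.of_forall (fun K => by fun_prop))
      (by
        filter_upwards [eventually_ge_atTop (0 : ℝ)] with K hK
        exact ae_of_all _ (fun ω => ENNReal.ofReal_le_ofReal
          (max_le_max (by linarith) le_rfl)))
      (hup 0 le_rfl)
      (ae_of_all _ (fun ω => by
        refine tendsto_const_nhds.congr' ?_
        filter_upwards [eventually_ge_atTop (ω i.succ)] with K hK
        rw [max_eq_right (by linarith)]; simp))
    rwa [lintegral_zero] at this
  have hlim2 : Tendsto (fun K => (I K).toReal) atTop (𝓝 0) := by
    exact (ENNReal.tendsto_toReal ENNReal.zero_ne_top).comp hlim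
  refine tendsto_of_tendsto_of_tendsto_of_le_of_le' tendsto_const_nhds hlim2 ?_ ?_
  · filter_upwards [eventually_ge_atTop (0 : ℝ)] with K hK using (h1 i).1 K hK
  · filter_upwards [eventually_ge_atTop (0 : ℝ)] with K hK using hlow K hK

/-- Proposition 3.2: with `𝔓 = Ω` and traded calls,
Condition C (i),(ii),(iv) is necessary and sufficient for the absence of a robust
uniformly strong arbitrage; if moreover (iii) fails, there is no robust uniformly
strong arbitrage but no market calibrated model exists. -/
theorem robust_arbitrage_characterisation_calls
    {n : ℕ} (hn : 1 ≤ n) {s₀ : ℝ} (hs₀ : 0 < s₀) (c : Fin n → ℝ → ℝ) :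
    ((CondC1 c ∧ CondC2 s₀ c ∧ CondC4 c) ↔
      ¬ RobustArbitrage Static.callPayoff c (Omega n s₀)) ∧
    ((CondC1 c ∧ CondC2 s₀ c ∧ CondC4 c ∧ ¬ CondC3 c) →
      (¬ RobustArbitrage Static.callPayoff c (Omega n s₀) ∧
        ¬ ∃ Q : Measure (Path n), Calibrated Static.callPayoff c (Omega n s₀) Q)) := by
  refine ⟨⟨fun h => no_arb hs₀ c h.1 h.2.1 h.2.2, cond_of_no_arb c⟩, ?_⟩
  rintro ⟨h1, h2, h4, h3⟩
  exact ⟨no_arb hs₀ c h1 h2 h4, fun ⟨Q, hQ⟩ => h3 (cond3_of_calibrated c h1 Q hQ)⟩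

end RobustFin
end
end

section
/- Robust pricing–hedging duality with traded calls: Suppose the market input (X_c, 𝒫, 𝔓) admits no weak free lunch with vanishing risk. Let G : ℝ₊^n → [−∞, ∞) be an upper semi-continuous function such that G(s₁,…,s_n) ≤ K(1 + s₁ + … + s_n) on ℝ₊^n for some constant K. Then the superhedging price equals the supremum of the expectation over market calibrated models: sup{E_ℙ[G(S)] : ℙ a market calibrated model} = inf{𝒫(X) : there exists an admissible (X, Δ) with Ψ_{X,Δ} ≥ G on 𝔓}. -/
open MeasureTheory Set Filter Topology
open scoped ENNReal NNReal Classical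

noncomputable section

namespace RobustFin

/-- Functions dominated by a multiple of the weight `T`. -/
def LG {X : Type*} (T : X → ℝ) : Submodule ℝ (X → ℝ) where
  carrier := {f | ∃ C, ∀ x, |f x| ≤ C * T x}
  zero_mem' := ⟨0, by simp⟩
  add_mem' := by
    rintro f g ⟨C, hC⟩ ⟨D, hD⟩
    refine ⟨C + D, fun x => ?_⟩
    have := abs_add_le (f x) (g x)
    have h1 := hC x
    have h2 := hD x
    simp only [Pi.add_apply]
    linarith [add_mul C D (T x)]
  smul_mem' := by
    rintro a f ⟨C, hC⟩
    refine ⟨|a| * C, fun x => ?_⟩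
    simp only [Pi.smul_apply, smul_eq_mul, abs_mul, mul_assoc]
    exact mul_le_mul_of_nonneg_left (hC x) (abs_nonneg a)

lemma exists_measure_of_functional {X : Type*} [TopologicalSpace X] [T2Space X]
    [LocallyCompactSpace X] [MeasurableSpace X] [BorelSpace X] (T : X → ℝ) (hT : Continuous T)
    (hT1 : ∀ x, 1 ≤ T x) (hTc : ∀ r, IsCompact {x | T x ≤ r})
    (ℓ : LG T →ₗ[ℝ] ℝ) (hpos : ∀ f : LG T, (∀ x, 0 ≤ f.1 x) → 0 ≤ ℓ f)
    (r : ℕ → ℝ) (hr : Tendsto r atTop atTop) (hr0 : ∀ m, 0 < r m)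
    (e : ℕ → LG T) (he0 : ∀ m x, 0 ≤ (e m).1 x)
    (he : ∀ m x, r m < T x → T x ≤ (e m).1 x) (hel : Tendsto (fun m => ℓ (e m)) atTop (𝓝 0)) :
    ∃ μ : Measure X, ∀ f : LG T, Continuous f.1 → Integrable f.1 μ ∧ ∫ x, f.1 x ∂μ = ℓ f := by
  have hmono : ∀ f g : LG T, (∀ x, f.1 x ≤ g.1 x) → ℓ f ≤ ℓ g := by
    intro f g h
    have := hpos (g - f) (fun x => by simpa using h x)
    rw [map_sub] at this
    linarith
  have hmem : ∀ f : CompactlySupportedContinuousMap X ℝ, (f : X → ℝ) ∈ LG T := by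
    intro f
    obtain ⟨C, hC⟩ := f.hasCompactSupport.exists_bound_of_continuous f.continuous
    refine ⟨C, fun x => (hC x).trans ?_⟩
    have : 0 ≤ C := (norm_nonneg _).trans (hC x)
    nlinarith [hT1 x]
  let Λ : PositiveLinearMap ℝ (CompactlySupportedContinuousMap X ℝ) ℝ :=
    { toFun := fun g => ℓ ⟨g, hmem g⟩
      map_add' := fun g g' => by rw [← map_add]; rfl
      map_smul' := fun a g => by rw [RingHom.id_apply, ← map_smul]; rfl
      monotone' := fun g g' h => hmono _ _ h }
  let μ := RealRMK.rieszMeasure Λ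
  -- cutoffs
  let χ : ℕ → X → ℝ := fun m x => max 0 (min 1 (2 - T x / r m))
  have hχc : ∀ m, Continuous (χ m) := fun m => by
    simp only [χ]; fun_prop
  have hχ0 : ∀ m x, 0 ≤ χ m x := fun m x => le_max_left _ _
  have hχ1 : ∀ m x, χ m x ≤ 1 := fun m x => max_le zero_le_one (min_le_left _ _)
  have hχe : ∀ m x, T x ≤ r m → χ m x = 1 := fun m x h => by
    have : T x / r m ≤ 1 := (div_le_one (hr0 m)).2 h
    simp only [χ]
    rw [min_eq_left (by linarith), max_eq_right zero_le_one]
  have hχs : ∀ m x, 2 * r m < T x → χ m x = 0 := fun m x h => by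
    have : 2 ≤ T x / r m := (le_div_iff₀ (hr0 m)).2 h.le
    simp only [χ]
    exact max_eq_left ((min_le_right _ _).trans (by linarith))
  have hχlim : ∀ x, ∀ᶠ m in atTop, χ m x = 1 := fun x =>
    (hr.eventually_ge_atTop (T x)).mono fun m hm => hχe m x hm
  have hcs : ∀ (f : X → ℝ) m, HasCompactSupport (fun x => f x * χ m x) := fun f m => by
    refine HasCompactSupport.intro (hTc (2 * r m)) fun x hx => ?_
    rw [hχs m x (by simpa using hx), mul_zero]
  have hcut : ∀ (f : LG T), Continuous f.1 → ∀ m, ∃ h : (fun x => f.1 x * χ m x) ∈ LG T,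
      Integrable (fun x => f.1 x * χ m x) μ ∧ ∫ x, f.1 x * χ m x ∂μ = ℓ ⟨_, h⟩ := by
    intro f hf m
    let g : CompactlySupportedContinuousMap X ℝ := ⟨⟨fun x => f.1 x * χ m x, hf.mul (hχc m)⟩, hcs _ m⟩
    exact ⟨hmem g, g.continuous.integrable_of_hasCompactSupport g.hasCompactSupport,
      RealRMK.integral_rieszMeasure Λ g⟩
  let TT : LG T := ⟨T, 1, fun x => by rw [one_mul, abs_of_nonneg (by linarith [hT1 x])]⟩
  have hTint : Integrable T μ := by
    refine ⟨hT.measurable.aestronglyMeasurable, ?_⟩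
    have h1 : ∫⁻ x, ‖T x‖ₑ ∂μ ≤ liminf (fun m => ∫⁻ x, ‖T x * χ m x‖ₑ ∂μ) atTop := by
      refine le_trans (lintegral_mono fun x => ?_) (lintegral_liminf_le fun m => by
        exact (hT.mul (hχc m)).measurable.enorm)
      refine (Tendsto.liminf_eq ?_).ge
      refine tendsto_const_nhds.congr' ?_
      filter_upwards [hχlim x] with m hm
      rw [hm, mul_one]
    refine lt_of_le_of_lt h1 (lt_of_le_of_lt ?_ (ENNReal.ofReal_lt_top (r := ℓ TT)))
    refine liminf_le_of_le (by isBoundedDefault) fun b hb => ?_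
    obtain ⟨m, hm⟩ := hb.exists
    refine hm.trans ?_
    obtain ⟨h, hi, hI⟩ := hcut TT hT m
    have h0 : ∀ x, 0 ≤ T x * χ m x := fun x => mul_nonneg (by linarith [hT1 x]) (hχ0 m x)
    calc ∫⁻ x, ‖T x * χ m x‖ₑ ∂μ = ∫⁻ x, ENNReal.ofReal (T x * χ m x) ∂μ := by
          refine lintegral_congr fun x => ?_
          rw [Real.enorm_eq_ofReal (h0 x)]
      _ = ENNReal.ofReal (∫ x, T x * χ m x ∂μ) :=
          (ofReal_integral_eq_lintegral_ofReal hi (Eventually.of_forall h0)).symm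
      _ ≤ ENNReal.ofReal (ℓ TT) := by
          refine ENNReal.ofReal_le_ofReal ?_
          rw [hI]
          refine hmono _ _ fun x => ?_
          show T x * χ m x ≤ T x
          nlinarith [hT1 x, hχ1 m x]
  refine ⟨μ, fun f hf => ?_⟩
  obtain ⟨C, hC⟩ := f.2
  have hfInt : Integrable f.1 μ := (hTint.const_mul C).mono' hf.measurable.aestronglyMeasurable
    (Eventually.of_forall hC)
  refine ⟨hfInt, ?_⟩
  have hl1 : Tendsto (fun m => ∫ x, f.1 x * χ m x ∂μ) atTop (𝓝 (∫ x, f.1 x ∂μ)) := by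
    refine tendsto_integral_of_dominated_convergence (fun x => C * T x)
      (fun m => (hf.mul (hχc m)).measurable.aestronglyMeasurable) (hTint.const_mul C)
      (fun m => Eventually.of_forall fun x => ?_) (Eventually.of_forall fun x => ?_)
    · rw [norm_mul, Real.norm_eq_abs, Real.norm_eq_abs, abs_of_nonneg (hχ0 m x)]
      nlinarith [hC x, abs_nonneg (f.1 x), hχ1 m x]
    · refine tendsto_const_nhds.congr' ?_
      filter_upwards [hχlim x] with m hm
      rw [hm, mul_one]
  have hl2 : Tendsto (fun m => ∫ x, f.1 x * χ m x ∂μ) atTop (𝓝 (ℓ f)) := by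
    rw [tendsto_iff_norm_sub_tendsto_zero]
    refine squeeze_zero (fun m => norm_nonneg _) (fun m => ?_) (by simpa using hel.const_mul C)
    obtain ⟨h, hi, hI⟩ := hcut f hf m
    rw [hI, Real.norm_eq_abs]
    have key : ∀ x, |f.1 x * χ m x - f.1 x| ≤ C * (e m).1 x := by
      intro x
      have hC0 : 0 ≤ C := by
        by_contra hneg
        have := (abs_nonneg _).trans (hC x)
        nlinarith [hT1 x]
      rcases le_or_gt (T x) (r m) with hx | hx
      · rw [hχe m x hx]; simpa using mul_nonneg hC0 (he0 m x)
      · have : f.1 x * χ m x - f.1 x = - (f.1 x * (1 - χ m x)) := by ring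
        rw [this, abs_neg, abs_mul, abs_of_nonneg (by linarith [hχ1 m x] : 0 ≤ 1 - χ m x)]
        have h1 := he m x hx
        have h2 := hC x
        nlinarith [abs_nonneg (f.1 x), hχ0 m x, mul_le_mul_of_nonneg_left h1 hC0]
    have e1 := hmono (⟨_, h⟩ - f) (C • e m) (fun x => (abs_le.1 (key x)).2)
    have e2 := hmono (-(C • e m)) (⟨_, h⟩ - f) (fun x => (abs_le.1 (key x)).1)
    rw [map_sub, map_smul, smul_eq_mul] at e1
    rw [map_sub, map_neg, map_smul, smul_eq_mul] at e2
    exact abs_le.2 ⟨e2, e1⟩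
  exact tendsto_nhds_unique hl1 hl2

lemma exists_approx {X : Type*} [PseudoMetricSpace X] (G : X → EReal)
    (hG : UpperSemicontinuous G) (w : X → ℝ) (hw : Continuous w) (hGw : ∀ x, G x ≤ (w x : EReal)) :
    ∃ h : ℕ → X → ℝ, (∀ k, Continuous (h k)) ∧ (∀ k x, 0 ≤ h k x) ∧ (∀ k x, h k x ≤ k) ∧
      (∀ x, Monotone fun k => h k x) ∧ (∀ k x, G x ≤ ((w x - h k x : ℝ) : EReal)) ∧
      (∀ x (a : ℝ), G x < ((w x - a : ℝ) : EReal) → ∃ k, a < h k x) := by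
  -- truncated difference
  have hF : ∀ (k : ℕ) x, ∃ y : ℝ, 0 ≤ y ∧ y ≤ k ∧ (∀ a : ℝ, a ≤ y ↔ (a ≤ k ∧ G x ≤ ((w x - a : ℝ) : EReal))) := by
    intro k x
    rcases eq_or_ne (G x) ⊥ with hb | hb
    · exact ⟨k, by positivity, le_rfl, fun a => by simp [hb]⟩
    · have ht : G x ≠ ⊤ := fun h => by simpa [h] using hGw x
      lift G x to ℝ using ⟨ht, hb⟩ with g hg
      have hgw : g ≤ w x := by have := hGw x; rw [← hg] at this; exact_mod_cast this
      refine ⟨min k (w x - g), le_min (by positivity) (by linarith), min_le_left _ _, fun a => ?_⟩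
      rw [le_min_iff, EReal.coe_le_coe_iff, le_sub_comm]
  choose F hF0 hFk hFi using hF
  let h : ℕ → X → ℝ := fun k x => ⨅ y, (F k y + k * dist x y)
  have hbdd : ∀ (k : ℕ) x, BddBelow (range fun y => F k y + k * dist x y) := fun k x =>
    ⟨0, by rintro _ ⟨y, rfl⟩; have := hF0 k y; positivity⟩
  have hle : ∀ k x y, h k x ≤ F k y + k * dist x y := fun k x y => ciInf_le (hbdd k x) y
  have hge : ∀ k x a, (∀ y, a ≤ F k y + k * dist x y) → a ≤ h k x := fun k x a H => by
    have : Nonempty X := ⟨x⟩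
    exact le_ciInf H
  have hle' : ∀ k x, h k x ≤ F k x := fun k x => by simpa using hle k x x
  refine ⟨h, fun k => ?_, fun k x => hge _ _ _ fun y => ?_, fun k x => (hle' k x).trans (hFk k x),
    fun x k l hkl => hge _ _ _ fun y => ?_, fun k x => ?_, fun x a ha => ?_⟩
  · have : LipschitzWith (k : ℝ≥0) (h k) := by
      refine LipschitzWith.of_le_add_mul _ fun x x' => ?_
      rw [← sub_le_iff_le_add]
      refine hge _ _ _ fun y => ?_
      have h1 := hle k x y
      have h2 := mul_le_mul_of_nonneg_left (dist_triangle x x' y) (Nat.cast_nonneg (α := ℝ) k)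
      simp only [NNReal.coe_natCast]
      linarith
    exact this.continuous
  · have := hF0 k y; positivity
  · refine (hle k x y).trans ?_
    have hkl' : (k : ℝ) ≤ l := by exact_mod_cast hkl
    have h1 : F k y ≤ F l y := (hFi l y _).2 ⟨(hFk k y).trans hkl', ((hFi k y _).1 le_rfl).2⟩
    have := mul_le_mul_of_nonneg_right hkl' (dist_nonneg (x := x) (y := y))
    linarith
  · exact ((hFi k x _).1 (hle' k x)).2
  · obtain ⟨q, hq1, hq2⟩ := EReal.lt_iff_exists_real_btwn.1 ha
    have hq2' : q < w x - a := by exact_mod_cast hq2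
    obtain ⟨b, hb1, hb2⟩ := exists_between (show a < w x - q by linarith)
    have ev : ∀ᶠ y in 𝓝 x, G y < (q : EReal) ∧ b < w y - q :=
      (hG x _ hq1).and ((hw.sub continuous_const).continuousAt.eventually (lt_mem_nhds hb2))
    obtain ⟨δ, hδ, hball⟩ := Metric.eventually_nhds_iff.1 ev
    obtain ⟨k, hk⟩ := exists_nat_ge (max b (b / δ))
    refine ⟨k, lt_of_lt_of_le hb1 (hge _ _ _ fun y => ?_)⟩
    rcases lt_or_ge (dist y x) δ with hy | hy
    · obtain ⟨h1, h2⟩ := hball hy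
      have : b ≤ F k y := (hFi k y b).2 ⟨(le_max_left _ _).trans hk,
        h1.le.trans (by exact_mod_cast (by linarith : q ≤ w y - b))⟩
      have h3 : (0:ℝ) ≤ k * dist x y := by positivity
      linarith
    · have h1 : b ≤ k * δ := (div_le_iff₀ hδ).1 ((le_max_right _ _).trans hk)
      have h2 : (k : ℝ) * δ ≤ k * dist x y := by
        rw [dist_comm]; exact mul_le_mul_of_nonneg_left hy (by positivity)
      linarith [hF0 k y]

lemma le_eexp_of_approx {X : Type*} [MeasurableSpace X] (μ : Measure X) (G : X → EReal)
    (w : X → ℝ) (hw : Integrable w μ) (h : ℕ → X → ℝ) (hm : ∀ k, Integrable (h k) μ)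
    (h0 : ∀ k x, 0 ≤ h k x) (hmono : ∀ x, Monotone fun k => h k x)
    (hle : ∀ k x, G x ≤ ((w x - h k x : ℝ) : EReal))
    (hlim : ∀ x (a : ℝ), G x < ((w x - a : ℝ) : EReal) → ∃ k, a < h k x) (v : ℝ)
    (hv : ∀ k, v ≤ ∫ x, (w x - h k x) ∂μ) :
    (v : EReal) ≤ ((∫⁻ x, posE (G x) ∂μ : ℝ≥0∞) : EReal) -
      ((∫⁻ x, posE (-(G x)) ∂μ : ℝ≥0∞) : EReal) := by
  let H : X → ℝ≥0∞ := fun x => ⨆ k, ENNReal.ofReal (h k x)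
  have hHm : AEMeasurable H μ := AEMeasurable.iSup fun k => (hm k).aemeasurable.ennreal_ofReal
  have hHle : ∫⁻ x, H x ∂μ ≤ ENNReal.ofReal (∫ x, w x ∂μ - v) := by
    simp only [H]
    rw [lintegral_iSup' (fun k => (hm k).aemeasurable.ennreal_ofReal)
      (Eventually.of_forall fun x k l hkl => ENNReal.ofReal_le_ofReal (hmono x hkl))]
    refine iSup_le fun k => ?_
    rw [← ofReal_integral_eq_lintegral_ofReal (hm k) (Eventually.of_forall (h0 k))]
    refine ENNReal.ofReal_le_ofReal ?_
    have := hv k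
    rw [integral_sub hw (hm k)] at this
    linarith
  have hHfin : ∫⁻ x, H x ∂μ ≠ ⊤ := ne_top_of_le_ne_top ENNReal.ofReal_ne_top hHle
  have hae : ∀ᵐ x ∂μ, G x = ((w x - (H x).toReal : ℝ) : EReal) := by
    filter_upwards [ae_lt_top' hHm hHfin] with x hx
    have hk : ∀ k, h k x ≤ (H x).toReal := fun k => by
      rw [← ENNReal.ofReal_le_iff_le_toReal hx.ne]
      exact le_iSup (fun k => ENNReal.ofReal (h k x)) k
    refine le_antisymm ?_ ?_
    · refine le_of_forall_gt_imp_ge_of_dense fun z hz => ?_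
      obtain ⟨q, hq1, hq2⟩ := EReal.lt_iff_exists_real_btwn.1 hz
      have hq1' : w x - (H x).toReal < q := by exact_mod_cast hq1
      by_contra hcon
      have hall : ∀ k, h k x ≤ w x - q := fun k => by
        have := (hq2.trans (not_le.1 hcon)).le.trans (hle k x)
        have : q ≤ w x - h k x := by exact_mod_cast this
        linarith
      have : H x ≤ ENNReal.ofReal (w x - q) :=
        iSup_le fun k => ENNReal.ofReal_le_ofReal (hall k)
      have h2 := ENNReal.toReal_mono ENNReal.ofReal_ne_top this
      rw [ENNReal.toReal_ofReal ((h0 0 x).trans (hall 0))] at h2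
      linarith
    · by_contra hcon
      obtain ⟨k, hk'⟩ := hlim x _ (not_le.1 hcon)
      exact absurd (hk k) (not_le.2 hk')
  have hHi : Integrable (fun x => (H x).toReal) μ := integrable_toReal_of_lintegral_ne_top hHm hHfin
  have hgi : Integrable (fun x => w x - (H x).toReal) μ := hw.sub hHi
  have e1 : ∫⁻ x, posE (G x) ∂μ = ∫⁻ x, ENNReal.ofReal (w x - (H x).toReal) ∂μ := by
    refine lintegral_congr_ae ?_
    filter_upwards [hae] with x hx
    rw [hx, posE, if_neg (EReal.coe_ne_top _), EReal.toReal_coe]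
  have e2 : ∫⁻ x, posE (-(G x)) ∂μ = ∫⁻ x, ENNReal.ofReal (-(w x - (H x).toReal)) ∂μ := by
    refine lintegral_congr_ae ?_
    filter_upwards [hae] with x hx
    rw [hx, posE, ← EReal.coe_neg, if_neg (EReal.coe_ne_top _), EReal.toReal_coe]
  have e3 := integral_eq_lintegral_pos_part_sub_lintegral_neg_part hgi
  have f1 : ∫⁻ x, ENNReal.ofReal (w x - (H x).toReal) ∂μ ≠ ⊤ :=
    (Integrable.lintegral_lt_top hgi).ne
  have f2 : ∫⁻ x, ENNReal.ofReal (-(w x - (H x).toReal)) ∂μ ≠ ⊤ :=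
    (Integrable.lintegral_lt_top hgi.neg).ne
  rw [e1, e2, ← EReal.coe_ennreal_toReal f1, ← EReal.coe_ennreal_toReal f2, ← EReal.coe_sub, ← e3,
    EReal.coe_le_coe_iff, integral_sub hw hHi]
  have : ∫ x, (H x).toReal ∂μ ≤ ∫ x, w x ∂μ - v := by
    rw [integral_toReal hHm (ae_lt_top' hHm hHfin)]
    refine ENNReal.toReal_le_of_le_ofReal ?_ hHle
    have h3 := hv 0
    rw [integral_sub hw (hm 0)] at h3
    linarith [integral_nonneg (μ := μ) (f := h 0) (fun x => h0 0 x)]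
  linarith



/-- `f` is the payoff of an admissible semi-static strategy with price `p`. -/
def Port {n : ℕ} (c : Fin n → ℝ → ℝ) (f : Path n → ℝ) (p : ℝ) : Prop :=
  ∃ (X : Static n) (D : Dyn n), D.Nonneg ∧ (∀ ω, X.callPayoff ω + D.gains ω = f ω) ∧ X.price c = p

/-- The zero dynamic strategy. -/
def Dyn.zero (n : ℕ) : Dyn n := ⟨fun _ _ => 0, fun _ => measurable_const, fun _ => ⟨0, by simp⟩⟩

lemma Dyn.zero_gains {n : ℕ} (ω : Path n) : (Dyn.zero n).gains ω = 0 := by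
  simp [Dyn.gains, Dyn.zero]

lemma Dyn.zero_nonneg {n : ℕ} : (Dyn.zero n).Nonneg := fun _ _ => le_rfl

lemma Port.const {n : ℕ} (c : Fin n → ℝ → ℝ) (a : ℝ) : Port c (fun _ => a) a :=
  ⟨⟨a, 0, fun _ => 0, fun i => i.elim0, fun _ => 0, fun _ => le_rfl⟩, Dyn.zero n, Dyn.zero_nonneg,
    fun ω => by simp [Static.callPayoff, Dyn.zero_gains], by simp [Static.price]⟩

lemma Port.call {n : ℕ} (c : Fin n → ℝ → ℝ) (a : ℝ) (i : Fin n) {k : ℝ} (hk : 0 ≤ k) :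
    Port c (fun ω => a * max (ω i.succ - k) 0) (a * c i k) :=
  ⟨⟨0, 1, fun _ => a, fun _ => i, fun _ => k, fun _ => hk⟩, Dyn.zero n, Dyn.zero_nonneg,
    fun ω => by simp [Static.callPayoff, Dyn.zero_gains], by simp [Static.price]⟩

lemma Port.dyn {n : ℕ} (c : Fin n → ℝ → ℝ) (D : Dyn n) (hD : D.Nonneg) : Port c D.gains 0 :=
  ⟨⟨0, 0, fun _ => 0, fun i => i.elim0, fun _ => 0, fun _ => le_rfl⟩, D, hD,
    fun ω => by simp [Static.callPayoff], by simp [Static.price]⟩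

lemma Port.static {n : ℕ} (c : Fin n → ℝ → ℝ) (X : Static n) :
    Port c X.callPayoff (X.price c) :=
  ⟨X, Dyn.zero n, Dyn.zero_nonneg, fun ω => by simp [Dyn.zero_gains], rfl⟩

lemma Port.add {n : ℕ} {c : Fin n → ℝ → ℝ} {f g : Path n → ℝ} {p q : ℝ}
    (hf : Port c f p) (hg : Port c g q) : Port c (fun ω => f ω + g ω) (p + q) := by
  obtain ⟨X, D, hD, hX, rfl⟩ := hf
  obtain ⟨Y, E, hE, hY, rfl⟩ := hg
  refine ⟨⟨X.const + Y.const, X.m + Y.m, Fin.append X.coeff Y.coeff, Fin.append X.idx Y.idx,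
    Fin.append X.strike Y.strike, fun k => ?_⟩,
    ⟨fun j x => D.pos j x + E.pos j x, fun j => (D.meas j).add (E.meas j), fun j => ?_⟩,
    fun j x => add_nonneg (hD j x) (hE j x), fun ω => ?_, ?_⟩
  · refine Fin.addCases (fun k => ?_) (fun k => ?_) k
    · rw [Fin.append_left]; exact X.strike_nonneg k
    · rw [Fin.append_right]; exact Y.strike_nonneg k
  · obtain ⟨C, hC⟩ := D.bdd j
    obtain ⟨C', hC'⟩ := E.bdd j
    exact ⟨C + C', fun x => (abs_add_le _ _).trans (add_le_add (hC x) (hC' x))⟩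
  · show _ = f ω + g ω
    rw [← hX, ← hY]
    simp only [Static.callPayoff, Dyn.gains, Fin.sum_univ_add, Fin.append_left, Fin.append_right,
      add_mul, Finset.sum_add_distrib]
    ring
  · simp only [Static.price, Fin.sum_univ_add, Fin.append_left, Fin.append_right]
    ring

lemma Port.smul {n : ℕ} {c : Fin n → ℝ → ℝ} {f : Path n → ℝ} {p : ℝ}
    (hf : Port c f p) {t : ℝ} (ht : 0 ≤ t) : Port c (fun ω => t * f ω) (t * p) := by
  obtain ⟨X, D, hD, hX, rfl⟩ := hf
  refine ⟨⟨t * X.const, X.m, fun k => t * X.coeff k, X.idx, X.strike, X.strike_nonneg⟩,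
    ⟨fun j x => t * D.pos j x, fun j => (D.meas j).const_mul t, fun j => ?_⟩,
    fun j x => mul_nonneg ht (hD j x), fun ω => ?_, ?_⟩
  · obtain ⟨C, hC⟩ := D.bdd j
    exact ⟨t * C, fun x => by
      rw [abs_mul, abs_of_nonneg ht]; exact mul_le_mul_of_nonneg_left (hC x) ht⟩
  · show _ = t * f ω
    rw [← hX]
    simp only [Static.callPayoff, Dyn.gains, mul_add, Finset.mul_sum, mul_assoc]
  · simp only [Static.price, mul_add, Finset.mul_sum, mul_assoc]

lemma Port.sum {n : ℕ} {c : Fin n → ℝ → ℝ} {ι : Type*} (s : Finset ι) {f : ι → Path n → ℝ}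
    {p : ι → ℝ} (hf : ∀ i, Port c (f i) (p i)) :
    Port c (fun ω => ∑ i ∈ s, f i ω) (∑ i ∈ s, p i) := by
  classical
  induction s using Finset.induction_on with
  | empty => simpa using Port.const c 0
  | insert a s ha ih => simpa [Finset.sum_insert ha] using (hf a).add ih

lemma Port.neg_static {n : ℕ} (c : Fin n → ℝ → ℝ) (X : Static n) :
    Port c (fun ω => -X.callPayoff ω) (-X.price c) := by
  refine ⟨⟨-X.const, X.m, fun k => -X.coeff k, X.idx, X.strike, X.strike_nonneg⟩,
    Dyn.zero n, Dyn.zero_nonneg, fun ω => ?_, ?_⟩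
  · simp [Static.callPayoff, Dyn.zero_gains]; ring
  · simp [Static.price]; ring

/-- The weight `1 + S₁ + … + S_n`. -/
def wt {n : ℕ} (ω : Path n) : ℝ := 1 + ∑ i : Fin n, ω i.succ

lemma continuous_wt {n : ℕ} : Continuous (wt (n := n)) := by unfold wt; fun_prop

lemma one_le_wt {n : ℕ} {s₀ : ℝ} {ω : Path n} (h : ω ∈ Omega n s₀) : 1 ≤ wt ω := by
  have : 0 ≤ ∑ i : Fin n, ω i.succ := Finset.sum_nonneg fun i _ => h.2 _
  unfold wt; linarith

lemma le_wt {n : ℕ} {s₀ : ℝ} {ω : Path n} (h : ω ∈ Omega n s₀) (i : Fin n) : ω i.succ ≤ wt ω := by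
  have : ω i.succ ≤ ∑ i : Fin n, ω i.succ :=
    Finset.single_le_sum (f := fun i : Fin n => ω i.succ) (fun i _ => h.2 _) (Finset.mem_univ i)
  unfold wt; linarith

lemma le_wt' {n : ℕ} {s₀ : ℝ} (hs₀ : 0 < s₀) {ω : Path n} (h : ω ∈ Omega n s₀) (i : Fin (n + 1)) :
    ω i ≤ (1 + s₀) * wt ω := by
  have h1 := one_le_wt h
  refine Fin.cases ?_ (fun i => ?_) i
  · rw [h.1]; nlinarith
  · have := le_wt h i; nlinarith

lemma isCompact_wt {n : ℕ} {s₀ : ℝ} (P : Set (Path n)) (hPsub : P ⊆ Omega n s₀)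
    (hs₀ : 0 < s₀) (hPclosed : IsClosed P) (r : ℝ) : IsCompact {x : P | wt x.1 ≤ r} := by
  rw [Subtype.isCompact_iff]
  have : (Subtype.val '' {x : P | wt x.1 ≤ r}) = P ∩ {ω | wt ω ≤ r} := by
    ext ω; simp [and_comm]
  rw [this]
  refine IsCompact.of_isClosed_subset (isCompact_univ_pi
    (fun _ : Fin (n + 1) => isCompact_Icc (a := (0:ℝ)) (b := (1 + s₀) * r)))
    (hPclosed.inter (isClosed_le continuous_wt continuous_const)) ?_
  rintro ω ⟨h1, h2⟩ i -
  have h2' : wt ω ≤ r := h2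
  exact ⟨(hPsub h1).2 i, (le_wt' hs₀ (hPsub h1) i).trans (by nlinarith)⟩

lemma Port.wt {n : ℕ} (c : Fin n → ℝ → ℝ) {C : ℝ} :
    ∃ f p, Port c f p ∧ ∀ s₀, ∀ ω ∈ Omega n s₀, f ω = C * wt ω := by
  refine ⟨_, _, (Port.const c C).add (Port.sum Finset.univ
    (fun i => Port.call c C i (le_refl 0))), fun s₀ ω h => ?_⟩
  simp only [sub_zero, RobustFin.wt, mul_add, mul_one, Finset.mul_sum]
  congr 1
  exact Finset.sum_congr rfl fun i _ => by rw [max_eq_left (h.2 _)]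

lemma callPayoff_lg {n : ℕ} (s₀ : ℝ) (X : Static n) :
    ∃ C, ∀ ω ∈ Omega n s₀, |X.callPayoff ω| ≤ C * wt ω := by
  refine ⟨|X.const| + ∑ k, |X.coeff k|, fun ω h => ?_⟩
  have h1 := one_le_wt h
  unfold Static.callPayoff
  refine (abs_add_le _ _).trans ?_
  rw [add_mul, Finset.sum_mul]
  refine add_le_add (by nlinarith [abs_nonneg X.const]) ((Finset.abs_sum_le_sum_abs _ _).trans
    (Finset.sum_le_sum fun k _ => ?_))
  rw [abs_mul]
  refine mul_le_mul_of_nonneg_left ?_ (abs_nonneg _)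
  rw [abs_of_nonneg (le_max_right _ _)]
  refine max_le ?_ (by linarith)
  linarith [le_wt h (X.idx k), X.strike_nonneg k]

lemma diff_lg {n : ℕ} {s₀ : ℝ} (hs₀ : 0 < s₀) (j : Fin n) {ω : Path n} (h : ω ∈ Omega n s₀) :
    |ω j.succ - ω j.castSucc| ≤ (1 + s₀) * wt ω := by
  rw [abs_le]
  have := le_wt' hs₀ h j.succ
  have := le_wt' hs₀ h j.castSucc
  have := h.2 j.succ
  have := h.2 j.castSucc
  constructor <;> linarith

lemma gains_lg {n : ℕ} {s₀ : ℝ} (hs₀ : 0 < s₀) (D : Dyn n) :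
    ∃ C, ∀ ω ∈ Omega n s₀, |D.gains ω| ≤ C * wt ω := by
  choose B hB using D.bdd
  refine ⟨∑ j, B j * (1 + s₀), fun ω h => ?_⟩
  unfold Dyn.gains
  rw [Finset.sum_mul]
  refine (Finset.abs_sum_le_sum_abs _ _).trans (Finset.sum_le_sum fun j _ => ?_)
  rw [abs_mul, mul_assoc]
  exact mul_le_mul (hB j _) (diff_lg hs₀ j h) (abs_nonneg _) ((abs_nonneg _).trans (hB j (restr j ω)))

lemma continuous_restr {n : ℕ} (j : Fin n) : Continuous (restr (n := n) j) := by
  unfold restr; fun_prop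

lemma measurable_gains {n : ℕ} (D : Dyn n) : Measurable D.gains := by
  unfold Dyn.gains
  refine Finset.measurable_sum _ fun j _ => ?_
  exact ((D.meas j).comp (continuous_restr j).measurable).mul (by fun_prop)

lemma continuous_callPayoff {n : ℕ} (X : Static n) : Continuous X.callPayoff := by
  unfold Static.callPayoff; fun_prop

/-- A single nonneg position at time `j`. -/
lemma exists_dyn_single {n : ℕ} (j : Fin n) (g : (Fin j → ℝ) → ℝ) (hg : Measurable g)
    (hg0 : ∀ x, 0 ≤ g x) (B : ℝ) (hB : ∀ x, g x ≤ B) :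
    ∃ D : Dyn n, D.Nonneg ∧ ∀ ω, D.gains ω = g (restr j ω) * (ω j.succ - ω j.castSucc) := by
  refine ⟨⟨fun i x => if h : i = j then g (fun k => x ⟨k, by rw [h]; exact k.2⟩) else 0,
    fun i => ?_, fun i => ⟨B, fun x => ?_⟩⟩, fun i x => ?_, fun ω => ?_⟩
  · by_cases h : i = j
    · subst h; simpa using hg
    · simp [h]
  · by_cases h : i = j
    · simp only [h, dite_true]; rw [abs_of_nonneg (hg0 _)]; exact hB _
    · simp only [h, dite_false, abs_zero]; exact (hg0 0).trans (hB 0)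
  · by_cases h : i = j
    · simp only [h, dite_true]; exact hg0 _
    · simp [h]
  · unfold Dyn.gains
    rw [Finset.sum_eq_single j]
    · simp
    · intro i _ hi; simp [hi]
    · simp

/-- Extending the supermartingale inequality from continuous to measurable positions. -/
lemma gains_nonpos {n : ℕ} {X : Type*} [MeasurableSpace X] (μ : Measure X) (i : X → Path n)
    (hi : Measurable i) (T : X → ℝ) (hT1 : ∀ x, 0 ≤ T x) (hT : Integrable T μ) (j : Fin n)
    (hb : ∀ x, |i x j.succ - i x j.castSucc| ≤ T x)
    (hc : ∀ g : BoundedContinuousFunction (Fin j → ℝ) ℝ, (∀ y, 0 ≤ g y) →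
      ∫ x, g (restr j (i x)) * (i x j.succ - i x j.castSucc) ∂μ ≤ 0)
    (f : (Fin j → ℝ) → ℝ) (hf : Measurable f) (hf0 : ∀ y, 0 ≤ f y) (B : ℝ) (hB : ∀ y, f y ≤ B) :
    ∫ x, f (restr j (i x)) * (i x j.succ - i x j.castSucc) ∂μ ≤ 0 := by
  have hrm : Measurable fun x => restr j (i x) := (continuous_restr j).measurable.comp hi
  have hdm : Measurable fun x => i x j.succ - i x j.castSucc := by fun_prop
  have hdi : Integrable (fun x => i x j.succ - i x j.castSucc) μ :=
    hT.mono' hdm.aestronglyMeasurable (Eventually.of_forall hb)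
  have hfi : ∀ (g : (Fin j → ℝ) → ℝ) (C : ℝ), Measurable g → (∀ y, ‖g y‖ ≤ C) →
      Integrable (fun x => g (restr j (i x)) * (i x j.succ - i x j.castSucc)) μ := fun g C hg hC =>
    hdi.bdd_mul (hg.comp hrm).aestronglyMeasurable (Eventually.of_forall fun x => hC _)
  let κ : Measure X := μ.withDensity fun x => ENNReal.ofReal (T x)
  have : IsFiniteMeasure κ := isFiniteMeasure_withDensity_ofReal hT.2
  let ν : Measure (Fin j → ℝ) := κ.map fun x => restr j (i x)
  have hfν : Integrable f ν := by
    refine Integrable.of_bound hf.aestronglyMeasurable B (Eventually.of_forall fun y => ?_)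
    rw [Real.norm_eq_abs, abs_of_nonneg (hf0 y)]; exact hB y
  refine le_of_forall_pos_le_add fun ε hε => ?_
  obtain ⟨g, hg, hgi⟩ := hfν.exists_boundedContinuous_integral_sub_le hε
  let g' : BoundedContinuousFunction (Fin j → ℝ) ℝ := g ⊔ 0
  have hg'a : ∀ y, g' y = max (g y) 0 := fun y => rfl
  have h1 := hc g' (fun y => by rw [hg'a]; exact le_max_right _ _)
  have i1 := hfi f B hf (fun y => by rw [Real.norm_eq_abs, abs_of_nonneg (hf0 y)]; exact hB y)
  have i2 := hfi g' ‖g'‖ g'.continuous.measurable g'.norm_coe_le_norm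
  have hfg : Integrable (fun x => T x * ‖f (restr j (i x)) - g (restr j (i x))‖) μ := by
    refine (hT.mul_bdd (c := B + ‖g‖) ?_ (Eventually.of_forall fun x => ?_))
    · exact ((hf.comp hrm).sub (g.continuous.measurable.comp hrm)).norm.aestronglyMeasurable
    · rw [norm_norm]
      refine (norm_sub_le _ _).trans (add_le_add ?_ (g.norm_coe_le_norm _))
      rw [Real.norm_eq_abs, abs_of_nonneg (hf0 _)]; exact hB _
  have e1 : ∫ y, ‖f y - g y‖ ∂ν = ∫ x, T x * ‖f (restr j (i x)) - g (restr j (i x))‖ ∂μ := by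
    simp only [ν]
    rw [integral_map (f := fun y => ‖f y - g y‖) hrm.aemeasurable
      (hf.sub g.continuous.measurable).norm.aestronglyMeasurable]
    simp only [κ]
    rw [integral_withDensity_eq_integral_toReal_smul₀ hT.aemeasurable.ennreal_ofReal
      (Eventually.of_forall fun x => ENNReal.ofReal_lt_top)]
    refine integral_congr_ae (Eventually.of_forall fun x => ?_)
    simp [ENNReal.toReal_ofReal (hT1 x)]
  have h2 : ∫ x, f (restr j (i x)) * (i x j.succ - i x j.castSucc) ∂μ -
      ∫ x, g' (restr j (i x)) * (i x j.succ - i x j.castSucc) ∂μ ≤ ε := by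
    rw [← integral_sub i1 i2]
    refine le_trans (integral_mono (i1.sub i2) hfg fun x => ?_) (e1 ▸ hg)
    simp only
    rw [← sub_mul]
    refine (le_abs_self _).trans ?_
    rw [abs_mul, mul_comm]
    refine mul_le_mul (hb x) ?_ (abs_nonneg _) (hT1 x)
    rw [hg'a, Real.norm_eq_abs]
    have := abs_max_sub_max_le_abs (f (restr j (i x))) (g (restr j (i x))) 0
    rwa [max_eq_left (hf0 _)] at this
  linarith

/-- Hahn–Banach step: a positive functional dominated by prices and at least `v` above `G`. -/
lemma exists_functional {n : ℕ} {s₀ : ℝ} (P : Set (Path n)) (hPsub : P ⊆ Omega n s₀)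
    (c : Fin n → ℝ → ℝ) (G : P → EReal)
    (hRA : ∀ f p, Port c f p → (∀ ω ∈ P, 0 ≤ f ω) → 0 ≤ p) (v : ℝ)
    (hv : ∀ f p, Port c f p → (∀ ω : P, G ω ≤ (f ω.1 : EReal)) → v ≤ p)
    (C : ℝ) (hG : ∀ ω : P, G ω ≤ ((C * wt ω.1 : ℝ) : EReal)) :
    ∃ ℓ : LG (fun x : P => wt x.1) →ₗ[ℝ] ℝ,
      (∀ f : LG (fun x : P => wt x.1), (∀ x, 0 ≤ f.1 x) → 0 ≤ ℓ f) ∧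
      (∀ h : LG (fun x : P => wt x.1), (∀ x, h.1 x = 1) → ℓ h = 1) ∧
      (∀ (h : LG (fun x : P => wt x.1)) f p, Port c f p → (∀ x, h.1 x ≤ f x.1) → ℓ h ≤ p) ∧
      (∀ h : LG (fun x : P => wt x.1), (∀ x, G x ≤ (h.1 x : EReal)) → v ≤ ℓ h) := by
  have hT1 : ∀ x : P, 1 ≤ wt x.1 := fun x => one_le_wt (hPsub x.2)
  let E := LG (fun x : P => wt x.1)
  have hne : P.Nonempty := by
    by_contra hne
    rw [Set.not_nonempty_iff_eq_empty] at hne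
    have := hRA _ _ (Port.const c (-1)) (by simp [hne])
    linarith
  obtain ⟨ω₀, hω₀⟩ := hne
  let one : E := ⟨fun _ => 1, 1, fun x => by simpa using hT1 x⟩
  have hone : one ≠ 0 := fun h => by
    have : one.1 ⟨ω₀, hω₀⟩ = 0 := by rw [h]; rfl
    simp [one] at this
  let s : PointedCone ℝ E :=
    { carrier := {h | ∃ f p t, ∃ g : P → ℝ, Port c f p ∧ 0 ≤ t ∧ (∀ x, G x ≤ (g x : EReal)) ∧
        ∀ x : P, p - f x.1 + t * (g x - v) ≤ h.1 x}
      zero_mem' := ⟨_, _, 0, _, Port.const c 0, le_rfl, hG, fun x => by simp⟩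
      add_mem' := by
        rintro h₁ h₂ ⟨f₁, p₁, t₁, g₁, hp₁, ht₁, hg₁, h₁'⟩ ⟨f₂, p₂, t₂, g₂, hp₂, ht₂, hg₂, h₂'⟩
        refine ⟨_, _, t₁ + t₂, fun x => min (g₁ x) (g₂ x), hp₁.add hp₂, add_nonneg ht₁ ht₂,
          fun x => ?_, fun x => ?_⟩
        · rcases min_choice (g₁ x) (g₂ x) with h | h <;> simp only [h, hg₁, hg₂]
        · have a1 := h₁' x
          have a2 := h₂' x
          have a3 := mul_le_mul_of_nonneg_left (min_le_left (g₁ x) (g₂ x)) ht₁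
          have a4 := mul_le_mul_of_nonneg_left (min_le_right (g₁ x) (g₂ x)) ht₂
          have : (h₁ + h₂).1 x = h₁.1 x + h₂.1 x := rfl
          rw [this]
          linarith
      smul_mem' := by
        rintro ⟨a, ha⟩ h ⟨f, p, t, g, hp, ht, hg, hh⟩
        refine ⟨_, _, a * t, g, hp.smul ha, mul_nonneg ha ht, hg, fun x => ?_⟩
        have : ((⟨a, ha⟩ : {r : ℝ // 0 ≤ r}) • h).1 x = a * h.1 x := rfl
        rw [this]
        have := mul_le_mul_of_nonneg_left (hh x) ha
        linarith }
  have hs : ∀ h : E, h ∈ s ↔ ∃ f p t, ∃ g : P → ℝ, Port c f p ∧ 0 ≤ t ∧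
      (∀ x, G x ≤ (g x : EReal)) ∧ ∀ x : P, p - f x.1 + t * (g x - v) ≤ h.1 x := fun h => Iff.rfl
  obtain ⟨ℓ, hℓ1, hℓ2⟩ := riesz_extension s (LinearPMap.mkSpanSingleton one (1 : ℝ) hone)
    (by
      rintro ⟨x, hx⟩ hxs
      obtain ⟨a, rfl⟩ := Submodule.mem_span_singleton.1 hx
      refine le_of_le_of_eq (b := a) ?_ (Eq.symm
        ((LinearPMap.mkSpanSingleton'_apply (σ := RingHom.id ℝ) one (1 : ℝ) _ a hx).trans
          (mul_one a)))
      obtain ⟨f, p, t, g, hp, ht, hg, hh⟩ := (hs _).1 hxs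
      have hh' : ∀ x : P, p - f x.1 + t * (g x - v) ≤ a := fun x => by
        have := hh x
        have e : (a • one).1 x = a * 1 := rfl
        rw [e] at this
        linarith
      have hq := hp.add (Port.const c (a - p + t * v))
      rcases ht.eq_or_lt with rfl | ht'
      · have := hRA _ _ hq (fun ω hω => by have := hh' ⟨ω, hω⟩; simp only at this; linarith)
        linarith
      · have := hv _ _ (hq.smul (inv_nonneg.2 ht)) (fun ω => (hg ω).trans (by
          rw [EReal.coe_le_coe_iff, le_inv_mul_iff₀ ht']
          have := hh' ω
          linarith))
        rw [le_inv_mul_iff₀ ht'] at this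
        linarith)
    (by
      intro y
      obtain ⟨B, hB⟩ := y.2
      obtain ⟨f, p, hp, hf⟩ := Port.wt c (C := B)
      refine ⟨⟨p • one, Submodule.mem_span_singleton.2 ⟨p, rfl⟩⟩, (hs _).2
        ⟨f, p, 0, _, hp, le_rfl, hG, fun x => ?_⟩⟩
      have e : (p • one + y).1 x = p * 1 + y.1 x := rfl
      show _ ≤ (p • one + y).1 x
      rw [e, hf _ _ (hPsub x.2)]
      have := (abs_le.1 (hB x)).1
      simp only at this
      linarith)
  have hℓone : ℓ one = 1 := by
    have := hℓ1 ⟨one, Submodule.mem_span_singleton_self one⟩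
    exact this.trans (LinearPMap.mkSpanSingleton'_apply_self (σ := RingHom.id ℝ) _ _ _ _)
  refine ⟨ℓ, fun f hf => hℓ2 f ((hs _).2 ⟨_, _, 0, _, Port.const c 0, le_rfl, hG, fun x => by
      simpa using hf x⟩), fun h hh => ?_, fun h f p hp hh => ?_, fun h hh => ?_⟩
  · rw [← hℓone]; congr 1; ext x; exact hh x
  · have := hℓ2 (p • one - h) ((hs _).2 ⟨f, p, 0, _, hp, le_rfl, hG, fun x => by
      have e : (p • one - h).1 x = p * 1 - h.1 x := rfl
      rw [e]
      linarith [hh x]⟩)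
    rw [map_sub, map_smul, hℓone, smul_eq_mul] at this
    linarith
  · have := hℓ2 (h - v • one) ((hs _).2 ⟨_, _, 1, _, Port.const c 0, zero_le_one, hh, fun x => by
      have e : (h - v • one).1 x = h.1 x - v * 1 := rfl
      rw [e]
      linarith⟩)
    rw [map_sub, map_smul, hℓone, smul_eq_mul] at this
    linarith

lemma strong_duality {n : ℕ} (hn : 1 ≤ n) {s₀ : ℝ} (hs₀ : 0 < s₀) (P : Set (Path n))
    (hPsub : P ⊆ Omega n s₀) (hPclosed : IsClosed P)
    (c : Fin n → ℝ → ℝ) (hc : ∀ i, Tendsto (fun m : ℕ => c i m) atTop (𝓝 0))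
    (G : (Fin n → ℝ) → EReal)
    (hGusc : UpperSemicontinuousOn G {s | ∀ i, 0 ≤ s i})
    (hRA : ∀ f p, Port c f p → (∀ ω ∈ P, 0 ≤ f ω) → 0 ≤ p) (v : ℝ)
    (hv : ∀ f p, Port c f p → (∀ ω : P, G (tailCoords ω.1) ≤ (f ω.1 : EReal)) → v ≤ p)
    (C : ℝ) (hG : ∀ ω : P, G (tailCoords ω.1) ≤ ((C * wt ω.1 : ℝ) : EReal)) :
    ∃ Q : Measure (Path n), Calibrated Static.callPayoff c P Q ∧
      (v : EReal) ≤ eexpE Q (fun ω => G (tailCoords ω)) := by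
  have hT1 : ∀ x : P, 1 ≤ wt x.1 := fun x => one_le_wt (hPsub x.2)
  have hTc : Continuous fun x : P => wt x.1 := continuous_wt.comp continuous_subtype_val
  have hPm : MeasurableSet P := hPclosed.measurableSet
  have : LocallyCompactSpace P := hPclosed.isClosedEmbedding_subtypeVal.locallyCompactSpace
  obtain ⟨ℓ, hpos, hone, hport, hℓv⟩ := exists_functional P hPsub c (fun x => G (tailCoords x.1))
    hRA v hv C hG
  have hn' : (1 : ℝ) ≤ n := by exact_mod_cast hn
  -- tail portfolios
  have hte : ∀ m : ℕ, Port c (fun ω => ∑ i : Fin n, 2 * max (ω i.succ - m) 0)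
      (∑ i : Fin n, 2 * c i m) := fun m =>
    Port.sum Finset.univ fun i => Port.call c 2 i (Nat.cast_nonneg m)
  let e : ℕ → LG (fun x : P => wt x.1) := fun m =>
    ⟨fun x => ∑ i : Fin n, 2 * max (x.1 i.succ - m) 0, 2 * n, fun x => by
      rw [abs_of_nonneg (Finset.sum_nonneg fun i _ => by positivity)]
      have : ∑ i : Fin n, 2 * max (x.1 i.succ - m) 0 ≤ ∑ i : Fin n, 2 * wt x.1 := by
        refine Finset.sum_le_sum fun i _ => ?_
        refine mul_le_mul_of_nonneg_left (max_le ?_ (by linarith [hT1 x])) zero_le_two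
        have := le_wt (hPsub x.2) i
        have : (0:ℝ) ≤ m := Nat.cast_nonneg m
        linarith
      refine this.trans (le_of_eq ?_)
      simp; ring⟩
  have he0 : ∀ m x, 0 ≤ (e m).1 x := by
    intro m x
    show 0 ≤ ∑ i : Fin n, 2 * max (x.1 i.succ - (m : ℝ)) 0
    exact Finset.sum_nonneg fun i _ => by positivity
  obtain ⟨μ, hμ⟩ := exists_measure_of_functional (fun x : P => wt x.1) hTc hT1
    (isCompact_wt P hPsub hs₀ hPclosed) ℓ hpos (fun m : ℕ => 2 * (n * m + 1))
    (by
      refine Tendsto.const_mul_atTop two_pos (tendsto_atTop_add_const_right _ _ ?_)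
      exact Tendsto.const_mul_atTop (by linarith) tendsto_natCast_atTop_atTop)
    (fun m => by positivity) e he0
    (fun m x hx => by
      show wt x.1 ≤ ∑ i : Fin n, 2 * max (x.1 i.succ - m) 0
      have h1 : ∑ i : Fin n, 2 * (x.1 i.succ - m) ≤ ∑ i : Fin n, 2 * max (x.1 i.succ - m) 0 :=
        Finset.sum_le_sum fun i _ => mul_le_mul_of_nonneg_left (le_max_left _ _) zero_le_two
      refine le_trans ?_ h1
      rw [← Finset.mul_sum, Finset.sum_sub_distrib]
      simp only [Finset.sum_const, Finset.card_univ, Fintype.card_fin, nsmul_eq_mul]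
      unfold wt at hx ⊢
      linarith)
    (by
      refine squeeze_zero (fun m => hpos _ (he0 m))
        (fun m => hport (e m) _ _ (hte m) fun x => le_rfl) ?_
      have := tendsto_finsetSum (Finset.univ : Finset (Fin n))
        (fun i _ => (hc i).const_mul (2:ℝ))
      simpa using this)
  let TT : LG (fun x : P => wt x.1) :=
    ⟨fun x : P => wt x.1, 1, fun x => by rw [one_mul, abs_of_nonneg (by linarith [hT1 x])]⟩
  have hTint : Integrable (fun x : P => wt x.1) μ := (hμ TT hTc).1
  let one : LG (fun x : P => wt x.1) := ⟨fun _ => 1, 1, fun x => by simpa using hT1 x⟩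
  have hμ1 : IsProbabilityMeasure μ := by
    obtain ⟨h1, h2⟩ := hμ one continuous_const
    rw [hone one fun _ => rfl] at h2
    have : IsFiniteMeasure μ := by
      rcases (integrable_const_iff (c := (1:ℝ))).1 h1 with h | h
      · exact absurd h one_ne_zero
      · exact h
    have h3 : μ.real univ = 1 := by simpa [one] using h2
    refine ⟨?_⟩
    rw [measureReal_def] at h3
    exact (ENNReal.toReal_eq_one_iff _).1 h3
  have hemb : MeasurableEmbedding (Subtype.val : P → Path n) := MeasurableEmbedding.subtype_coe hPm
  refine ⟨μ.map Subtype.val, ⟨?_, ?_, ?_⟩, ?_⟩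
  · exact Measure.isProbabilityMeasure_map measurable_subtype_coe.aemeasurable
  · rw [Measure.map_apply measurable_subtype_coe hPm]
    simp
  · intro X D hD
    -- integrals of payoff
    obtain ⟨B₁, hB₁⟩ := callPayoff_lg s₀ X
    have hX := hμ ⟨fun x => X.callPayoff x.1, B₁, fun x => hB₁ _ (hPsub x.2)⟩
      ((continuous_callPayoff X).comp continuous_subtype_val)
    have hXp := hport ⟨fun x => X.callPayoff x.1, B₁, fun x => hB₁ _ (hPsub x.2)⟩ _ _
      (Port.static c X) (fun x => le_rfl)
    rw [← hX.2] at hXp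
    obtain ⟨B₂, hB₂⟩ := gains_lg hs₀ D
    have hDi : Integrable (fun x : P => D.gains x.1) μ :=
      (hTint.const_mul B₂).mono' ((measurable_gains D).comp measurable_subtype_coe).aestronglyMeasurable
        (Eventually.of_forall fun x => hB₂ _ (hPsub x.2))
    have hTint' := hTint.const_mul (1 + s₀)
    have hDn : ∫ x : P, D.gains x.1 ∂μ ≤ 0 := by
      unfold Dyn.gains
      rw [integral_finsetSum]
      · refine Finset.sum_nonpos fun j _ => ?_
        obtain ⟨B, hB⟩ := D.bdd j
        refine gains_nonpos μ Subtype.val measurable_subtype_coe (fun x => (1 + s₀) * wt x.1)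
          (fun x => by have := hT1 x; positivity) hTint' j (fun x => diff_lg hs₀ j (hPsub x.2))
          (fun g hg0 => ?_) (D.pos j) (D.meas j) (hD j) B (fun y => (le_abs_self _).trans (hB y))
        obtain ⟨D', hD', hDg⟩ := exists_dyn_single j g g.continuous.measurable hg0 ‖g‖
          (fun y => (le_abs_self _).trans (g.norm_coe_le_norm y))
        obtain ⟨B₃, hB₃⟩ := gains_lg hs₀ D'
        have h1 := hμ ⟨fun x => D'.gains x.1, B₃, fun x => hB₃ _ (hPsub x.2)⟩ (by
          simp only [hDg]
          exact ((g.continuous.comp (continuous_restr j)).mul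
            ((continuous_apply j.succ).sub (continuous_apply j.castSucc))).comp
              continuous_subtype_val)
        have h2 := hport ⟨fun x => D'.gains x.1, B₃, fun x => hB₃ _ (hPsub x.2)⟩ _ _
          (Port.dyn c D' hD') (fun x => le_rfl)
        rw [← h1.2] at h2
        simpa only [hDg] using h2
      · intro j _
        obtain ⟨B, hB⟩ := D.bdd j
        have hdm : Measurable fun x : P => x.1 j.succ - x.1 j.castSucc :=
          ((measurable_pi_apply j.succ).comp measurable_subtype_coe).sub
            ((measurable_pi_apply j.castSucc).comp measurable_subtype_coe)
        refine (hTint'.mono' hdm.aestronglyMeasurable (Eventually.of_forall fun x =>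
          diff_lg hs₀ j (hPsub x.2))).bdd_mul (c := B) ?_ (Eventually.of_forall fun x => hB _)
        exact ((D.meas j).comp ((continuous_restr j).measurable.comp
          measurable_subtype_coe)).aestronglyMeasurable
    have hi : Integrable (fun x : P => X.callPayoff x.1 + D.gains x.1) μ := hX.1.add hDi
    have e3 := integral_eq_lintegral_pos_part_sub_lintegral_neg_part hi
    have f1 := (Integrable.lintegral_lt_top hi).ne
    have f2 := (Integrable.lintegral_lt_top hi.neg).ne
    simp only [Pi.neg_apply] at f2
    unfold eexp
    rw [hemb.lintegral_map, hemb.lintegral_map, ← EReal.coe_ennreal_toReal f1,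
      ← EReal.coe_ennreal_toReal f2, ← EReal.coe_sub, ← e3, EReal.coe_le_coe_iff,
      integral_add hX.1 hDi]
    linarith
  · have hus : UpperSemicontinuous fun x : P => G (tailCoords x.1) := by
      intro x y hy
      have h1 := hGusc (tailCoords x.1) (fun i => (hPsub x.2).2 _) y hy
      have h2 : Tendsto (fun x : P => tailCoords x.1) (𝓝 x)
          (𝓝[{s | ∀ i, 0 ≤ s i}] (tailCoords x.1)) := by
        refine tendsto_nhdsWithin_iff.2 ⟨?_, Eventually.of_forall fun z i => (hPsub z.2).2 _⟩
        have : Continuous fun x : P => tailCoords x.1 := 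
          continuous_pi fun i => (continuous_apply i.succ).comp continuous_subtype_val
        exact this.continuousAt
      exact h2.eventually h1
    obtain ⟨h, hhc, hh0, hhk, hhm, hhG, hhl⟩ := exists_approx (fun x : P => G (tailCoords x.1)) hus
      (fun x => C * wt x.1) (continuous_const.mul hTc) hG
    unfold eexpE
    rw [hemb.lintegral_map, hemb.lintegral_map]
    have hLG : ∀ k, h k ∈ LG (fun x : P => wt x.1) := fun k => ⟨k, fun x => by
      rw [abs_of_nonneg (hh0 k x)]
      refine (hhk k x).trans ?_
      have : (0:ℝ) ≤ k := Nat.cast_nonneg k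
      nlinarith [hT1 x]⟩
    refine le_eexp_of_approx μ (fun x : P => G (tailCoords x.1)) (fun x => C * wt x.1)
      (hTint.const_mul C) h (fun k => (hμ ⟨h k, hLG k⟩ (hhc k)).1) hh0 hhm hhG hhl v fun k => ?_
    have hc1 : Continuous (C • TT - ⟨h k, hLG k⟩ : LG (fun x : P => wt x.1)).1 :=
      (continuous_const.mul hTc).sub (hhc k)
    have h1 := (hμ (C • TT - ⟨h k, hLG k⟩) hc1).2
    have h2 := hℓv (C • TT - ⟨h k, hLG k⟩) (hhG k)
    rw [← h1] at h2
    exact h2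

lemma weak_duality {n : ℕ} (P : Set (Path n)) (hPclosed : IsClosed P)
    (c : Fin n → ℝ → ℝ) (G : Path n → EReal) (Q : Measure (Path n))
    (hQ : Calibrated Static.callPayoff c P Q) (X : Static n) (D : Dyn n) (hD : D.Nonneg)
    (hX : ∀ ω ∈ P, G ω ≤ ((X.callPayoff ω + D.gains ω : ℝ) : EReal)) :
    eexpE Q G ≤ (X.price c : EReal) := by
  obtain ⟨h1, h2, h3⟩ := hQ
  refine le_trans ?_ (h3 X D hD)
  have hae : ∀ᵐ ω ∂Q, ω ∈ P := by
    rw [← prob_compl_eq_zero_iff hPclosed.measurableSet] at h2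
    exact h2
  unfold eexpE eexp
  refine EReal.sub_le_sub ?_ ?_
  · rw [EReal.coe_ennreal_le_coe_ennreal_iff]
    refine lintegral_mono_ae ?_
    filter_upwards [hae] with ω hω
    have := hX ω hω
    unfold posE
    generalize G ω = g at this
    induction g with
    | bot => simp
    | top => exact absurd (top_le_iff.1 this) (EReal.coe_ne_top _)
    | coe x =>
      rw [if_neg (EReal.coe_ne_top _), EReal.toReal_coe]
      exact ENNReal.ofReal_le_ofReal (by exact_mod_cast this)
  · rw [EReal.coe_ennreal_le_coe_ennreal_iff]
    refine lintegral_mono_ae ?_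
    filter_upwards [hae] with ω hω
    have := hX ω hω
    unfold posE
    generalize G ω = g at this
    induction g with
    | bot => simp
    | top => exact absurd (top_le_iff.1 this) (EReal.coe_ne_top _)
    | coe x =>
      rw [← EReal.coe_neg, if_neg (EReal.coe_ne_top _), EReal.toReal_coe]
      exact ENNReal.ofReal_le_ofReal (by
        have : x ≤ X.callPayoff ω + D.gains ω := by exact_mod_cast this
        linarith)

/-- Theorem 3.3, robust pricing–hedging duality with traded calls:
if the market input admits no WFLVR and `G` is upper semi-continuous with linear
growth, then the supremum of `E_ℙ[G]` over market calibrated models equals the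
superhedging price. -/
theorem duality_calls
    {n : ℕ} (hn : 1 ≤ n) {s₀ : ℝ} (hs₀ : 0 < s₀)
    (P : Set (Path n)) (hPsub : P ⊆ Omega n s₀) (hPclosed : IsClosed P)
    (c : Fin n → ℝ → ℝ)
    (hNA : ¬ WFLVR Static.callPayoff c P)
    (G : (Fin n → ℝ) → EReal) (hGtop : ∀ s, G s ≠ ⊤)
    (hGusc : UpperSemicontinuousOn G {s | ∀ i, 0 ≤ s i})
    (K : ℝ) (hG : ∀ s : Fin n → ℝ, (∀ i, 0 ≤ s i) → G s ≤ ((K * (1 + ∑ i, s i) : ℝ) : EReal)) :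
    (⨆ Q ∈ {Q : Measure (Path n) | Calibrated Static.callPayoff c P Q},
        eexpE Q (fun ω => G (tailCoords ω))) =
      V Static.callPayoff c P (fun ω => G (tailCoords ω)) := by
  refine le_antisymm ?_ ?_
  · refine iSup₂_le fun Q hQ => le_sInf ?_
    rintro _ ⟨X, D, hD, rfl, hX⟩
    exact weak_duality P hPclosed c _ Q hQ X D hD hX
  set W := V Static.callPayoff c P (fun ω => G (tailCoords ω)) with hW
  have hVle : ∀ f p, Port c f p → (∀ ω : P, G (tailCoords ω.1) ≤ (f ω.1 : EReal)) →
      W ≤ (p : EReal) := by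
    rintro f p ⟨X, D, hD, hX, rfl⟩ h
    refine sInf_le ⟨X, D, hD, rfl, fun ω hω => ?_⟩
    rw [hX]
    exact h ⟨ω, hω⟩
  have hGK : ∀ ω : P, G (tailCoords ω.1) ≤ ((K * wt ω.1 : ℝ) : EReal) := fun ω =>
    hG (tailCoords ω.1) fun i => (hPsub ω.2).2 _
  obtain ⟨fK, pK, hpK, hfK⟩ := Port.wt c (C := K)
  have hfK' : ∀ ω : P, G (tailCoords ω.1) ≤ (fK ω.1 : EReal) := fun ω => by
    rw [hfK s₀ _ (hPsub ω.2)]; exact hGK ω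
  have hWtop : W ≠ ⊤ := ne_top_of_le_ne_top (EReal.coe_ne_top pK) (hVle fK pK hpK hfK')
  rcases eq_or_ne W ⊥ with hWb | hWb
  · rw [hWb]; exact bot_le
  obtain ⟨v, hv⟩ : ∃ v : ℝ, (v : EReal) = W := ⟨W.toReal, EReal.coe_toReal hWtop hWb⟩
  rw [← hv] at hVle ⊢
  have hv' : ∀ f p, Port c f p → (∀ ω : P, G (tailCoords ω.1) ≤ (f ω.1 : EReal)) → v ≤ p :=
    fun f p h1 h2 => by exact_mod_cast hVle f p h1 h2
  have hRA : ∀ f p, Port c f p → (∀ ω ∈ P, 0 ≤ f ω) → 0 ≤ p := by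
    intro f p hp hf
    by_contra hneg
    push Not at hneg
    obtain ⟨t, ht⟩ := exists_nat_gt ((v - pK) / p)
    have h1 := hv' _ _ (hpK.add (hp.smul (Nat.cast_nonneg (α := ℝ) t))) fun ω =>
      (hfK' ω).trans (by
        rw [EReal.coe_le_coe_iff]
        have := mul_nonneg (Nat.cast_nonneg (α := ℝ) t) (hf ω.1 ω.2)
        linarith)
    rw [div_lt_iff_of_neg hneg] at ht
    linarith
  have hc : ∀ i, Tendsto (fun m : ℕ => c i m) atTop (𝓝 0) := by
    intro i
    have h0 : ∀ m : ℕ, 0 ≤ c i m := fun m => by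
      have := hRA _ _ (Port.call c 1 i (Nat.cast_nonneg m)) fun ω _ => by positivity
      linarith
    have hanti : Antitone fun m : ℕ => c i m := by
      intro k l hkl
      have hkl' : (k : ℝ) ≤ l := by exact_mod_cast hkl
      have := hRA _ _ ((Port.call c 1 i (Nat.cast_nonneg k)).add
        (Port.call c (-1) i (Nat.cast_nonneg l))) fun ω _ => by
          have : max (ω i.succ - l) 0 ≤ max (ω i.succ - k) 0 :=
            max_le_max (by linarith) le_rfl
          linarith
      simp only
      linarith
    have hbdd : BddBelow (range fun m : ℕ => c i m) := ⟨0, by rintro _ ⟨m, rfl⟩; exact h0 m⟩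
    have hlim := tendsto_atTop_ciInf hanti hbdd
    have hL0 : 0 ≤ ⨅ m : ℕ, c i m := le_ciInf h0
    rcases hL0.eq_or_lt with hL | hL
    · rw [← hL] at hlim; exact hlim
    exfalso
    apply hNA
    let Y : ℝ≥0 → Static n := fun k => ⟨0, 1, fun _ => -1, fun _ => i, fun _ => k, fun _ => k.2⟩
    have hYp : ∀ k ω, (Y k).callPayoff ω = -max (ω i.succ - k) 0 := fun k ω => by
      simp [Y, Static.callPayoff]
    have hYc : ∀ k, (Y k).price c = -c i k := fun k => by simp [Y, Static.price]
    refine ⟨fun m => Y m, fun _ => Dyn.zero n, Y 0, Dyn.zero n, -⨅ m : ℕ, c i m,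
      fun _ => Dyn.zero_nonneg, Dyn.zero_nonneg, fun ω hω => ?_, fun k ω hω => ?_, ?_, by linarith⟩
    · simp only [hYp, Dyn.zero_gains]
      refine tendsto_const_nhds.congr' ?_
      filter_upwards [tendsto_natCast_atTop_atTop.eventually_ge_atTop (ω i.succ)] with m hm
      rw [NNReal.coe_natCast, max_eq_right (by linarith)]
      simp
    · simp only [hYp, Dyn.zero_gains]
      have : max (ω i.succ - ((k : ℝ≥0) : ℝ)) 0 ≤ max (ω i.succ - ((0 : ℝ≥0) : ℝ)) 0 :=
        max_le_max (by simp) le_rfl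
      linarith
    · simp only [hYc, NNReal.coe_natCast]
      exact hlim.neg
  obtain ⟨Q, hQ, hQv⟩ := strong_duality hn hs₀ P hPsub hPclosed c hc G hGusc hRA v hv' K hGK
  exact hQv.trans (le_iSup₂ (f := fun Q _ => eexpE Q (fun ω => G (tailCoords ω))) Q hQ)

end RobustFin
end
end
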